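/- Let p ≥ 2 and let G = ⟨a₁,…,a_p | a₁²a₂²⋯a_p²⟩ be the fundamental group of the closed non-orientable surface of genus p, given by this presentation. Then every generating n-tuple of G satisfies n ≥ p and is Nielsen equivalent to the tuple (a₁,…,a_p, 1,…,1) consisting of the images of the standard generators followed by n − p copies of the identity. In particular, any two generating n-tuples of G are Nielsen equivalent. -/

import Mathlib

/-- An elementary Nielsen transformation on an `n`-tuple of elements of a group:
(T1) invert an entry, (T2) swap two distinct entries, (T3) replace an entry by its
product with another (distinct) entry. -/
inductive NielsenStep {G : Type*} [Group G] {n : ℕ} : (Fin n → G) → (Fin n → G) → Prop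
  | inv (T : Fin n → G) (i : Fin n) : NielsenStep T (Function.update T i (T i)⁻¹)
  | swap (T : Fin n → G) (i j : Fin n) (hij : i ≠ j) : NielsenStep T (T ∘ Equiv.swap i j)
  | mul (T : Fin n → G) (i j : Fin n) (hij : i ≠ j) :
      NielsenStep T (Function.update T i (T i * T j))

/-- Two `n`-tuples of elements of a group are Nielsen equivalent if a finite chain of
elementary Nielsen transformations carries one to the other. -/
def NielsenEquiv {G : Type*} [Group G] {n : ℕ} (T T' : Fin n → G) : Prop :=
  Relation.ReflTransGen NielsenStep T T'

/-- The non-orientable surface relator `a₁²a₂²⋯a_p²` in the free group on `a₁, …, a_p`. -/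
def nonorientableSurfaceRelator (p : ℕ) : FreeGroup (Fin p) :=
  (List.ofFn fun j : Fin p => FreeGroup.of j ^ 2).prod


namespace NS

section Basics
variable {G : Type*} [Group G] {n : ℕ}

theorem NE.refl (T : Fin n → G) : NielsenEquiv T T := Relation.ReflTransGen.refl

theorem NE.trans {T T' T'' : Fin n → G} (h : NielsenEquiv T T') (h' : NielsenEquiv T' T'') :
    NielsenEquiv T T'' := Relation.ReflTransGen.trans h h'

theorem NE.inv (T : Fin n → G) (i : Fin n) :
    NielsenEquiv T (Function.update T i (T i)⁻¹) := Relation.ReflTransGen.single (.inv T i)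

theorem NE.swap (T : Fin n → G) (i j : Fin n) (h : i ≠ j) :
    NielsenEquiv T (T ∘ Equiv.swap i j) := Relation.ReflTransGen.single (.swap T i j h)

theorem NE.mulR (T : Fin n → G) (i j : Fin n) (h : i ≠ j) :
    NielsenEquiv T (Function.update T i (T i * T j)) :=
  Relation.ReflTransGen.single (.mul T i j h)

theorem NE.mulRinv (T : Fin n → G) (i j : Fin n) (h : i ≠ j) :
    NielsenEquiv T (Function.update T i (T i * (T j)⁻¹)) := by
  have h1 := NE.inv T j
  have h2 := NE.mulR (Function.update T j (T j)⁻¹) i j h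
  have h3 := NE.inv (Function.update (Function.update T j (T j)⁻¹) i
    (Function.update T j (T j)⁻¹ i * Function.update T j (T j)⁻¹ j)) j
  convert NE.trans h1 (NE.trans h2 h3) using 1
  funext k
  by_cases hk : k = j
  · subst hk
    simp [h.symm]
  · by_cases hki : k = i
    · subst hki; simp [hk]
    · simp [hk, hki]

theorem NE.symm {T T' : Fin n → G} (h : NielsenEquiv T T') : NielsenEquiv T' T := by
  induction h with
  | refl => exact NE.refl _
  | tail _ hs ih =>
    refine NE.trans ?_ ih
    cases hs with
    | inv i =>
      convert NE.inv _ i using 1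
      simp
    | swap i j hij =>
      rename_i T _
      convert NE.swap _ i j hij using 1
      funext k; simp
    | mul i j hij =>
      rename_i T _
      convert NE.mulRinv _ i j hij using 1
      simp [hij.symm]

theorem NE.mulL (T : Fin n → G) (i j : Fin n) (h : i ≠ j) :
    NielsenEquiv T (Function.update T i (T j * T i)) := by
  have h1 := NE.inv T i
  have h2 := NE.mulRinv (Function.update T i (T i)⁻¹) i j h
  have h3 := NE.inv (Function.update (Function.update T i (T i)⁻¹) i
    (Function.update T i (T i)⁻¹ i * (Function.update T i (T i)⁻¹ j)⁻¹)) i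
  convert NE.trans h1 (NE.trans h2 h3) using 1
  simp [h.symm]

theorem NE.mulLinv (T : Fin n → G) (i j : Fin n) (h : i ≠ j) :
    NielsenEquiv T (Function.update T i ((T j)⁻¹ * T i)) := by
  have h1 := NE.inv T i
  have h2 := NE.mulR (Function.update T i (T i)⁻¹) i j h
  have h3 := NE.inv (Function.update (Function.update T i (T i)⁻¹) i
    (Function.update T i (T i)⁻¹ i * (Function.update T i (T i)⁻¹ j))) i
  convert NE.trans h1 (NE.trans h2 h3) using 1
  simp [h.symm]

theorem NE.perm (T : Fin n → G) (σ : Equiv.Perm (Fin n)) : NielsenEquiv T (T ∘ σ) := by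
  induction σ using Equiv.Perm.swap_induction_on generalizing T with
  | one => exact NE.refl _
  | swap_mul f x y hxy ih =>
    exact NE.trans (NE.swap T x y hxy) (ih (T ∘ Equiv.swap x y))

theorem NE.map {H : Type*} [Group H] (f : G →* H) {T T' : Fin n → G} (h : NielsenEquiv T T') :
    NielsenEquiv (f ∘ T) (f ∘ T') := by
  induction h with
  | refl => exact NE.refl _
  | tail _ hs ih =>
    refine NE.trans ih ?_
    cases hs with
    | inv i =>
      convert NE.inv _ i using 1
      rw [Function.comp_update]; simp
    | swap i j hij => exact NE.swap _ i j hij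
    | mul i j hij =>
      convert NE.mulR _ i j hij using 1
      rw [Function.comp_update]; simp

/-- Two-sided multiplication of the entry `i` by powers `-1, 0, 1` of the entry `j`. -/
theorem NE.two (T : Fin n → G) (i j : Fin n) (h : i ≠ j) (g g' : G)
    (hg : g = 1 ∨ g = T j ∨ g = (T j)⁻¹) (hg' : g' = 1 ∨ g' = T j ∨ g' = (T j)⁻¹) :
    NielsenEquiv T (Function.update T i (g * T i * g')) := by
  have h1 : NielsenEquiv T (Function.update T i (g * T i)) := by
    rcases hg with rfl | rfl | rfl
    · simpa using NE.refl T
    · exact NE.mulL T i j h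
    · exact NE.mulLinv T i j h
  refine NE.trans h1 ?_
  rcases hg' with rfl | rfl | rfl
  · simpa using NE.refl _
  · convert NE.mulR _ i j h using 1; simp [h.symm]
  · convert NE.mulRinv _ i j h using 1; simp [h.symm]

/-- All entries other than `j` may simultaneously be multiplied on both sides by the entry `j`
or its inverse. -/
theorem NE.many (T : Fin n → G) (j : Fin n) (g g' : Fin n → G)
    (hg : ∀ i, g i = 1 ∨ g i = T j ∨ g i = (T j)⁻¹)
    (hg' : ∀ i, g' i = 1 ∨ g' i = T j ∨ g' i = (T j)⁻¹) :
    NielsenEquiv T (fun i => if i = j then T j else g i * T i * g' i) := by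
  have key : ∀ A : Finset (Fin n), j ∉ A →
      NielsenEquiv T (fun i => if i ∈ A then g i * T i * g' i else T i) := by
    intro A
    induction A using Finset.induction_on with
    | empty => intro _; simpa using NE.refl T
    | insert a A ha ih =>
      intro hj
      have hja : a ≠ j := by rintro rfl; simp at hj
      have hjA : j ∉ A := fun h => hj (Finset.mem_insert_of_mem h)
      refine NE.trans (ih hjA) ?_
      convert NE.two _ a j hja (g a) (g' a) ?_ ?_ using 1
      · funext k
        by_cases hk : k = a
        · subst hk; simp [ha]
        · simp [hk]
      · simpa [hjA] using hg a
      · simpa [hjA] using hg' a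
  convert key (Finset.univ.erase j) (by simp) using 1
  funext k
  by_cases hk : k = j
  · subst hk; simp
  · simp [hk]

theorem NE.closure {T T' : Fin n → G} (h : NielsenEquiv T T') :
    Subgroup.closure (Set.range T) ≤ Subgroup.closure (Set.range T') := by
  have key : ∀ {T T' : Fin n → G}, NielsenEquiv T T' →
      Subgroup.closure (Set.range T') ≤ Subgroup.closure (Set.range T) := by
    intro T T' h
    induction h with
    | refl => exact le_rfl
    | tail _ hs ih =>
      refine le_trans ?_ ih
      rw [Subgroup.closure_le]
      rintro _ ⟨k, rfl⟩
      have hm : ∀ {U : Fin n → G} (k), U k ∈ Subgroup.closure (Set.range U) :=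
        fun k => Subgroup.subset_closure ⟨k, rfl⟩
      cases hs with
      | inv i =>
        by_cases hk : k = i
        · subst hk; simpa using hm k
        · simpa [hk] using hm k
      | swap i j hij => exact hm _
      | mul i j hij =>
        by_cases hk : k = i
        · subst hk; simpa using mul_mem (hm k) (hm j)
        · simpa [hk] using hm k
  exact key (NE.symm h)

theorem NE.closure_eq_top {T T' : Fin n → G} (h : NielsenEquiv T T')
    (hT : Subgroup.closure (Set.range T) = ⊤) : Subgroup.closure (Set.range T') = ⊤ :=
  top_le_iff.mp (hT ▸ NE.closure h)

end Basics


/-- A finitely supported partial injection extends to a permutation. -/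
theorem perm_ext {α : Type*} (R : α → α → Prop) (Z : Set α) (hZ : Z.Finite)
    (hR : ∀ x y, R x y → x ∈ Z ∧ y ∈ Z)
    (hf : ∀ x y y', R x y → R x y' → y = y') (hi : ∀ x x' y, R x y → R x' y → x = x') :
    ∃ σ : Equiv.Perm α, ∀ x y, R x y → σ x = y := by
  classical
  have : Finite Z := hZ
  have : Fintype Z := Fintype.ofFinite Z
  let P : Z → Prop := fun x => ∃ y, R x y
  let Q : Z → Prop := fun y => ∃ x, R x y
  have hc : ∀ x : {x : Z // P x}, R x.1 (Classical.choose x.2) :=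
    fun x => Classical.choose_spec x.2
  let f : {x : Z // P x} → {y : Z // Q y} :=
    fun x => ⟨⟨Classical.choose x.2, (hR _ _ (hc x)).2⟩, ⟨x.1, hc x⟩⟩
  have hfb : Function.Bijective f := by
    constructor
    · intro x x' h
      have h1 : Classical.choose x.2 = Classical.choose x'.2 :=
        congrArg (fun t : {y : Z // Q y} => (t.1 : α)) h
      have := hi _ _ _ (hc x) (h1 ▸ hc x')
      exact Subtype.ext (Subtype.ext this)
    · rintro ⟨⟨y, hy⟩, ⟨x, hx⟩⟩
      refine ⟨⟨⟨x, (hR _ _ hx).1⟩, ⟨y, hx⟩⟩, ?_⟩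
      apply Subtype.ext; apply Subtype.ext
      exact hf _ _ _ (hc _) hx
  let e := Equiv.ofBijective f hfb
  refine ⟨Equiv.Perm.ofSubtype (p := (· ∈ Z)) e.extendSubtype, ?_⟩
  intro x y hxy
  have hxZ := (hR _ _ hxy).1
  have h1 := Equiv.Perm.ofSubtype_apply_of_mem (p := (· ∈ Z)) e.extendSubtype hxZ
  rw [h1]
  have h2 := Equiv.extendSubtype_apply_of_mem e ⟨x, hxZ⟩ ⟨y, hxy⟩
  rw [h2]
  exact hf _ _ _ (hc ⟨⟨x, hxZ⟩, ⟨y, hxy⟩⟩) hxy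

section Free
variable {α : Type*} {n : ℕ}

/-- Adjacency in the Cayley tree of the free group. -/
def Adj (x y : FreeGroup α) : Prop :=
  (∃ a, y = x * FreeGroup.of a) ∨ (∃ a, x = y * FreeGroup.of a)

/-- Being joined by a path inside a finite set. -/
def CC (Y : Finset (FreeGroup α)) : FreeGroup α → FreeGroup α → Prop :=
  Relation.ReflTransGen (fun x y => Adj x y ∧ x ∈ Y ∧ y ∈ Y)

def Conn (Y : Finset (FreeGroup α)) : Prop := 1 ∈ Y ∧ ∀ y ∈ Y, CC Y 1 y

def Supp (Y : Finset (FreeGroup α)) (s : FreeGroup α) : Prop :=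
  s = 1 ∨ ∃ y ∈ Y, ∃ y' ∈ Y, ∃ a, s = y * FreeGroup.of a * y'⁻¹

theorem Adj.mul_left {x y : FreeGroup α} (h : Adj x y) (g : FreeGroup α) :
    Adj (g * x) (g * y) := by
  rcases h with ⟨a, rfl⟩ | ⟨a, rfl⟩
  · exact Or.inl ⟨a, by group⟩
  · exact Or.inr ⟨a, by group⟩

theorem CC.mono {Y Y' : Finset (FreeGroup α)} (h : Y ⊆ Y') {x y : FreeGroup α} (hc : CC Y x y) :
    CC Y' x y :=
  Relation.ReflTransGen.mono (fun _ _ hh => ⟨hh.1, h hh.2.1, h hh.2.2⟩) _ _ hc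

theorem first_hit [DecidableEq (FreeGroup α)] (Y : Finset (FreeGroup α)) (hY : Conn Y)
    (u v : FreeGroup α) (hu : u ∈ Y) (huv : u ≠ v) :
    (CC (Y.erase v) 1 u ∧ 1 ≠ v) ∨ (CC (Y.erase u) 1 v ∧ 1 ≠ u) := by
  have key : ∀ z, CC Y 1 z → ((CC (Y.erase v) 1 u ∧ 1 ≠ v) ∨ (CC (Y.erase u) 1 v ∧ 1 ≠ u)) ∨
      (CC ((Y.erase v).erase u) 1 z ∧ z ≠ u ∧ z ≠ v ∧ 1 ≠ u ∧ 1 ≠ v) := by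
    intro z hz
    induction hz with
    | refl =>
      by_cases h1 : (1 : FreeGroup α) = u
      · left; left
        refine ⟨?_, h1 ▸ huv⟩
        rw [← h1]; exact Relation.ReflTransGen.refl
      · by_cases h2 : (1 : FreeGroup α) = v
        · left; right
          refine ⟨?_, h1⟩
          rw [← h2]; exact Relation.ReflTransGen.refl
        · exact Or.inr ⟨Relation.ReflTransGen.refl, h1, h2, h1, h2⟩
    | tail hab hbc ih =>
      rename_i b c
      rcases ih with ih | ⟨ih, hbu, hbv, h1u, h1v⟩
      · exact Or.inl ih
      · by_cases hcu : c = u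
        · subst hcu
          left; left
          refine ⟨Relation.ReflTransGen.tail (CC.mono (Finset.erase_subset _ _) ih)
            ⟨hbc.1, Finset.mem_erase.2 ⟨hbv, hbc.2.1⟩, Finset.mem_erase.2 ⟨huv, hbc.2.2⟩⟩, h1v⟩
        · by_cases hcv : c = v
          · subst hcv
            left; right
            refine ⟨Relation.ReflTransGen.tail (CC.mono ?_ ih)
              ⟨hbc.1, Finset.mem_erase.2 ⟨hbu, hbc.2.1⟩,
                Finset.mem_erase.2 ⟨huv.symm, hbc.2.2⟩⟩, h1u⟩
            rw [Finset.erase_right_comm]; exact Finset.erase_subset _ _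
          · right
            refine ⟨Relation.ReflTransGen.tail ih ⟨hbc.1, ?_, ?_⟩, hcu, hcv, h1u, h1v⟩
            · simp [hbu, hbv, hbc.2.1]
            · simp [hcu, hcv, hbc.2.2]
  rcases key u (hY.2 u hu) with h | h
  · exact h
  · exact absurd rfl h.2.1

theorem core_aux (Y : Finset (FreeGroup α)) (hY : Conn Y) (S : Fin n → FreeGroup α) (i0 : Fin n)
    (u v : FreeGroup α) (hu : u ∈ Y) (hv : v ∈ Y) (huv : u ≠ v)
    (hS : ∀ i, i ≠ i0 → Supp Y (S i)) (hs : S i0 = u * v⁻¹)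
    (hc : ∀ _ : DecidableEq (FreeGroup α), CC (Y.erase v) 1 u) (h1v : 1 ≠ v) :
    ∃ Y' S', NielsenEquiv S S' ∧ Conn Y' ∧ (∀ i, Supp Y' (S' i)) ∧ Y'.card < Y.card := by
  classical
  have hc := hc inferInstance
  set s := u * v⁻¹ with hsdef
  have hsv : s * v = u := by simp [hsdef]
  let Y1 := Y.filter (fun y => y ≠ v ∧ CC (Y.erase v) 1 y)
  let Y2 := Y \ Y1
  have hY1 : ∀ y, y ∈ Y1 ↔ y ∈ Y ∧ y ≠ v ∧ CC (Y.erase v) 1 y := by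
    intro y; simp [Y1]
  have hY2 : ∀ y, y ∈ Y2 ↔ y ∈ Y ∧ y ∉ Y1 := by intro y; simp [Y2]
  have h11 : (1 : FreeGroup α) ∈ Y1 := (hY1 _).2 ⟨hY.1, h1v, Relation.ReflTransGen.refl⟩
  have hu1 : u ∈ Y1 := (hY1 _).2 ⟨hu, huv, hc⟩
  have hv1 : v ∉ Y1 := fun h => ((hY1 _).1 h).2.1 rfl
  have hv2 : v ∈ Y2 := (hY2 _).2 ⟨hv, hv1⟩
  have hext : ∀ y z, y ∈ Y1 → Adj y z → z ∈ Y → z ≠ v → z ∈ Y1 := by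
    intro y z hy ha hz hzv
    have hy := (hY1 _).1 hy
    exact (hY1 _).2 ⟨hz, hzv, Relation.ReflTransGen.tail hy.2.2
      ⟨ha, Finset.mem_erase.2 ⟨hy.2.1, hy.1⟩, Finset.mem_erase.2 ⟨hzv, hz⟩⟩⟩
  have hc1 : ∀ y, CC (Y.erase v) 1 y → y ∈ Y1 ∧ CC Y1 1 y := by
    intro y hy
    induction hy with
    | refl => exact ⟨h11, Relation.ReflTransGen.refl⟩
    | tail hab hbc ih =>
      have hm := hext _ _ ih.1 hbc.1 (Finset.mem_of_mem_erase hbc.2.2) (Finset.ne_of_mem_erase hbc.2.2)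
      exact ⟨hm, Relation.ReflTransGen.tail ih.2 ⟨hbc.1, ih.1, hm⟩⟩
  have hc2 : ∀ y, CC Y 1 y → y ∈ Y1 ∨ (y ∈ Y2 ∧ CC Y2 v y) := by
    intro y hy
    induction hy with
    | refl => exact Or.inl h11
    | tail hab hbc ih =>
      rename_i b c
      by_cases hcv : c = v
      · subst hcv; exact Or.inr ⟨hv2, Relation.ReflTransGen.refl⟩
      · by_cases hcm : c ∈ Y1
        · exact Or.inl hcm
        · right
          have hc2 : c ∈ Y2 := (hY2 _).2 ⟨hbc.2.2, hcm⟩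
          rcases ih with ih | ih
          · exact absurd (hext _ _ ih hbc.1 hbc.2.2 hcv) hcm
          · exact ⟨hc2, Relation.ReflTransGen.tail ih.2 ⟨hbc.1, ih.1, hc2⟩⟩
  have hw : ∃ w ∈ Y1, Adj w v := by
    have : ∀ y, CC Y 1 y → y ∈ Y1 ∨ ∃ w ∈ Y1, Adj w v := by
      intro y hy
      induction hy with
      | refl => exact Or.inl h11
      | tail hab hbc ih =>
        rename_i b c
        rcases ih with ih | ih
        · by_cases hcv : c = v
          · subst hcv; exact Or.inr ⟨b, ih, hbc.1⟩
          · exact Or.inl (hext _ _ ih hbc.1 hbc.2.2 hcv)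
        · exact Or.inr ih
    rcases this v (hY.2 v hv) with h | h
    · exact absurd h hv1
    · exact h
  let Y' := Y1 ∪ Y2.image (fun y => s * y)
  have hsub1 : Y1 ⊆ Y' := Finset.subset_union_left
  have hsub2 : ∀ y ∈ Y2, s * y ∈ Y' := fun y hy =>
    Finset.mem_union_right _ (Finset.mem_image_of_mem _ hy)
  have hconn : Conn Y' := by
    refine ⟨hsub1 h11, ?_⟩
    have ht : ∀ y, CC Y2 v y → CC Y' u (s * y) := by
      intro y hy
      induction hy with
      | refl => rw [hsv]; exact Relation.ReflTransGen.refl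
      | tail hab hbc ih =>
        exact Relation.ReflTransGen.tail ih
          ⟨hbc.1.mul_left s, hsub2 _ hbc.2.1, hsub2 _ hbc.2.2⟩
    intro y hy
    rcases Finset.mem_union.1 hy with hy | hy
    · exact CC.mono hsub1 (hc1 y ((hY1 y).1 hy).2.2).2
    · obtain ⟨z, hz, rfl⟩ := Finset.mem_image.1 hy
      rcases hc2 z (hY.2 z ((hY2 z).1 hz).1) with h | h
      · exact absurd h ((hY2 z).1 hz).2
      · exact Relation.ReflTransGen.trans (CC.mono hsub1 (hc1 u hc).2) (ht z h.2)
  have hcard : Y'.card < Y.card := by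
    have h1 : Y' ⊆ Y1 ∪ (Y2.erase v).image (fun y => s * y) := by
      intro y hy
      rcases Finset.mem_union.1 hy with hy | hy
      · exact Finset.mem_union_left _ hy
      · obtain ⟨z, hz, rfl⟩ := Finset.mem_image.1 hy
        by_cases hzv : z = v
        · subst hzv; apply Finset.mem_union_left; rw [hsv]; exact hu1
        · exact Finset.mem_union_right _
            (Finset.mem_image_of_mem _ (Finset.mem_erase.2 ⟨hzv, hz⟩))
    have h2 := Finset.card_le_card h1
    have h3 := Finset.card_union_le Y1 ((Y2.erase v).image (fun y => s * y))
    have h4 : ((Y2.erase v).image (fun y => s * y)).card ≤ (Y2.erase v).card :=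
      Finset.card_image_le
    have h5 : (Y2.erase v).card < Y2.card := Finset.card_erase_lt_of_mem hv2
    have h6 : Y2.card + Y1.card = Y.card :=
      Finset.card_sdiff_add_card_eq_card (Finset.filter_subset _ _)
    omega
  -- the new tuple
  let m : FreeGroup α → FreeGroup α := fun y => if y ∈ Y1 then 1 else s
  have hm : ∀ y ∈ Y, m y * y ∈ Y' := by
    intro y hy
    by_cases h : y ∈ Y1
    · simpa [m, h] using hsub1 h
    · simpa [m, h] using hsub2 y ((hY2 y).2 ⟨hy, h⟩)
  have hm' : ∀ y, m y = 1 ∨ m y = s := by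
    intro y
    by_cases h : y ∈ Y1 <;> simp [m, h]
  have hg : ∀ i, ∃ g g' : FreeGroup α, (g = 1 ∨ g = S i0 ∨ g = (S i0)⁻¹) ∧
      (g' = 1 ∨ g' = S i0 ∨ g' = (S i0)⁻¹) ∧ (i ≠ i0 → Supp Y' (g * S i * g')) := by
    intro i
    by_cases hi : i = i0
    · exact ⟨1, 1, Or.inl rfl, Or.inl rfl, fun h => absurd hi h⟩
    rcases hS i hi with h | ⟨y, hy, y', hy', a, h⟩
    · exact ⟨1, 1, Or.inl rfl, Or.inl rfl, fun _ => Or.inl (by simp [h])⟩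
    · refine ⟨m y, (m y')⁻¹, ?_, ?_, fun _ => Or.inr ⟨m y * y, hm y hy, m y' * y', hm y' hy', a, ?_⟩⟩
      · rcases hm' y with h | h <;> simp [h, hs]
      · rcases hm' y' with h | h
        · left; simp [h]
        · right; right; rw [h, hs]
      · rw [h]; group
  choose g g' hg1 hg2 hg3 using hg
  have hN := NE.many S i0 g g' hg1 hg2
  obtain ⟨w, hw1, hwv⟩ := hw
  rcases hwv with ⟨a, ha⟩ | ⟨a, ha⟩
  · refine ⟨Y', _, NE.trans hN (NE.inv _ i0), hconn, ?_, hcard⟩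
    intro i
    by_cases hi : i = i0
    · subst hi
      simp only [Function.update_self, if_true]
      refine Or.inr ⟨w, hsub1 hw1, u, hsub1 hu1, a, ?_⟩
      rw [hs, hsdef, ha]; group
    · simpa [hi] using hg3 i hi
  · refine ⟨Y', _, hN, hconn, ?_, hcard⟩
    intro i
    by_cases hi : i = i0
    · subst hi
      simp only [if_true]
      refine Or.inr ⟨u, hsub1 hu1, w, hsub1 hw1, a, ?_⟩
      rw [hs, hsdef, ha]; group
    · simpa [hi] using hg3 i hi

theorem core (Y : Finset (FreeGroup α)) (hY : Conn Y) (S : Fin n → FreeGroup α) (i0 : Fin n)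
    (u v : FreeGroup α) (hu : u ∈ Y) (hv : v ∈ Y) (huv : u ≠ v)
    (hS : ∀ i, i ≠ i0 → Supp Y (S i)) (hs : S i0 = u * v⁻¹) :
    ∃ Y' S', NielsenEquiv S S' ∧ Conn Y' ∧ (∀ i, Supp Y' (S' i)) ∧ Y'.card < Y.card := by
  classical
  rcases first_hit Y hY u v hu huv with h | h
  · refine core_aux Y hY S i0 u v hu hv huv hS hs ?_ h.2
    intro d; convert h.1
  · obtain ⟨Y', S', h1, h2⟩ := core_aux Y hY (Function.update S i0 (S i0)⁻¹) i0 v u hv hu huv.symm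
      (fun i hi => by simpa [hi] using hS i hi) (by simp [hs]) (by intro d; convert h.1) h.2
    exact ⟨Y', S', NE.trans (NE.inv S i0) h1, h2⟩

theorem reduce_step (Y : Finset (FreeGroup α)) (hY : Conn Y) (S : Fin n → FreeGroup α)
    (hS : ∀ i, Supp Y (S i)) (hgen : Subgroup.closure (Set.range S) = ⊤) (hne : ∃ y ∈ Y, y ≠ 1) :
    ∃ Y' S', NielsenEquiv S S' ∧ Conn Y' ∧ (∀ i, Supp Y' (S' i)) ∧ Y'.card < Y.card := by
  classical
  let R : α → FreeGroup α → FreeGroup α → Prop := fun a y y' =>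
    y ∈ Y ∧ y' ∈ Y ∧ (y * FreeGroup.of a * y'⁻¹ = 1 ∨ ∃ i, S i = y * FreeGroup.of a * y'⁻¹)
  by_cases hf : ∀ a y y1 y2, R a y y1 → R a y y2 → y1 = y2
  swap
  · push Not at hf
    obtain ⟨a, y, u, v, ⟨hy, hu, h1⟩, ⟨-, hv, h2⟩, huv⟩ := hf
    rcases h1 with h1 | ⟨i, h1⟩
    · have e1 : y * FreeGroup.of a = u := mul_inv_eq_one.1 h1
      rw [e1] at h2
      rcases h2 with h2 | ⟨j, h2⟩
      · exact absurd (mul_inv_eq_one.1 h2) huv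
      · exact core Y hY S j u v hu hv huv (fun i _ => hS i) h2
    · rcases h2 with h2 | ⟨j, h2⟩
      · have e2 : y * FreeGroup.of a = v := mul_inv_eq_one.1 h2
        rw [e2] at h1
        exact core Y hY S i v u hv hu huv.symm (fun i _ => hS i) h1
      · have hij : j ≠ i := by
          rintro rfl
          rw [h1] at h2
          exact huv (inv_injective (mul_left_cancel h2))
        obtain ⟨Y', S', h3, h4⟩ := core Y hY (Function.update S j ((S i)⁻¹ * S j)) j u v hu hv huv
          (fun k hk => by simpa [hk] using hS k) (by rw [Function.update_self, h1, h2]; group)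
        exact ⟨Y', S', NE.trans (NE.mulLinv S j i hij) h3, h4⟩
  by_cases hi : ∀ a y1 y2 y, R a y1 y → R a y2 y → y1 = y2
  swap
  · push Not at hi
    obtain ⟨a, u, v, y, ⟨hu, hy, h1⟩, ⟨hv, -, h2⟩, huv⟩ := hi
    rcases h1 with h1 | ⟨i, h1⟩
    · have e1 : FreeGroup.of a * y⁻¹ = u⁻¹ := by
        rw [mul_assoc] at h1; exact (inv_eq_of_mul_eq_one_right h1).symm
      rw [mul_assoc, e1] at h2
      rcases h2 with h2 | ⟨j, h2⟩
      · exact absurd (mul_inv_eq_one.1 h2).symm huv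
      · exact core Y hY S j v u hv hu huv.symm (fun i _ => hS i) h2
    · rcases h2 with h2 | ⟨j, h2⟩
      · have e2 : FreeGroup.of a * y⁻¹ = v⁻¹ := by
          rw [mul_assoc] at h2; exact (inv_eq_of_mul_eq_one_right h2).symm
        rw [mul_assoc, e2] at h1
        exact core Y hY S i u v hu hv huv (fun i _ => hS i) h1
      · have hij : i ≠ j := by
          rintro rfl
          rw [h1] at h2
          exact huv (mul_right_cancel (mul_right_cancel h2))
        obtain ⟨Y', S', h3, h4⟩ := core Y hY (Function.update S i (S i * (S j)⁻¹)) i u v hu hv huv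
          (fun k hk => by simpa [hk] using hS k) (by rw [Function.update_self, h1, h2]; group)
        exact ⟨Y', S', NE.trans (NE.mulRinv S i j hij) h3, h4⟩
  exfalso
  have hσ : ∀ a, ∃ σ : Equiv.Perm (FreeGroup α), ∀ x y, R a x y → σ x = y := fun a =>
    perm_ext (R a) Y Y.finite_toSet (fun x y h => ⟨h.1, h.2.1⟩) (hf a) (hi a)
  choose σ hσ using hσ
  let ψ : FreeGroup α →* Equiv.Perm (FreeGroup α) := FreeGroup.lift (fun a => (σ a)⁻¹)
  have hψ : ∀ a x y, R a x y → ψ (FreeGroup.of a) y = x := by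
    intro a x y h
    simp only [ψ, FreeGroup.lift_apply_of]
    rw [Equiv.Perm.inv_eq_iff_eq]; exact (hσ a x y h).symm
  have hψ1 : ∀ y, CC Y 1 y → ψ y y = 1 := by
    intro y hy
    induction hy with
    | refl => simp
    | tail hab hbc ih =>
      rename_i b c
      obtain ⟨h, hb, hc⟩ := hbc
      rcases h with ⟨a, h⟩ | ⟨a, h⟩
      · have := hψ a b c ⟨hb, hc, Or.inl (by simp [h])⟩
        have h3 : ψ c = ψ b * ψ (FreeGroup.of a) := by rw [h, map_mul]
        rw [h3, Equiv.Perm.mul_apply, this, ih]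
      · have := hψ a c b ⟨hc, hb, Or.inl (by simp [h])⟩
        have h3 : ψ b = ψ c * ψ (FreeGroup.of a) := by rw [h, map_mul]
        rw [← ih, h3, Equiv.Perm.mul_apply, this]
  have hfix : ∀ x, ψ x 1 = 1 := by
    intro x
    have hx : x ∈ Subgroup.closure (Set.range S) := by rw [hgen]; trivial
    induction hx using Subgroup.closure_induction with
    | mem x hx =>
      obtain ⟨i, rfl⟩ := hx
      rcases hS i with h | ⟨y, hy, y', hy', a, h⟩
      · simp [h]
      · have h3 := hψ a y y' ⟨hy, hy', Or.inr ⟨i, h⟩⟩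
        have h4 := hψ1 y (hY.2 y hy)
        have h5 := hψ1 y' (hY.2 y' hy')
        have h6 : (ψ y')⁻¹ 1 = y' := by rw [Equiv.Perm.inv_eq_iff_eq, h5]
        rw [h, map_mul, map_mul, map_inv, Equiv.Perm.mul_apply, Equiv.Perm.mul_apply, h6, h3, h4]
    | one => simp
    | mul x y _ _ hx hy => rw [map_mul, Equiv.Perm.mul_apply, hy, hx]
    | inv x _ hx => rw [map_inv, Equiv.Perm.inv_eq_iff_eq, hx]
  obtain ⟨y, hy, hy1⟩ := hne
  exact hy1 ((ψ y).injective ((hψ1 y (hY.2 y hy)).trans (hfix y).symm))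

theorem reduce_all (N : ℕ) : ∀ (Y : Finset (FreeGroup α)) (_ : Y.card ≤ N) (_ : Conn Y)
    (S : Fin n → FreeGroup α)
    (_ : ∀ i, Supp Y (S i)) (_ : Subgroup.closure (Set.range S) = ⊤),
    ∃ S', NielsenEquiv S S' ∧ ∀ i, S' i = 1 ∨ ∃ a, S' i = FreeGroup.of a := by
  induction N with
  | zero =>
    intro Y hN hY
    have := Finset.card_eq_zero.1 (Nat.le_zero.1 hN)
    have h1 := hY.1
    rw [this] at h1; simp at h1
  | succ N ih =>
    intro Y hN hY S hS hgen
    by_cases hne : ∃ y ∈ Y, y ≠ 1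
    · obtain ⟨Y', S', h1, h2, h3, h4⟩ := reduce_step Y hY S hS hgen hne
      obtain ⟨S'', h5, h6⟩ := ih Y' (by omega) h2 S' h3 (NE.closure_eq_top h1 hgen)
      exact ⟨S'', NE.trans h1 h5, h6⟩
    · push Not at hne
      refine ⟨S, NE.refl S, fun i => ?_⟩
      rcases hS i with h | ⟨y, hy, y', hy', a, h⟩
      · exact Or.inl h
      · right; exact ⟨a, by rw [h, hne y hy, hne y' hy']; simp⟩

theorem exists_conn (x : FreeGroup α) : ∃ Y : Finset (FreeGroup α), Conn Y ∧ x ∈ Y := by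
  classical
  have hadd : ∀ (Y : Finset (FreeGroup α)) (x z : FreeGroup α), Conn Y → x ∈ Y → Adj x z →
      ∃ Y : Finset (FreeGroup α), Conn Y ∧ z ∈ Y := by
    intro Y x z hY hx hxz
    refine ⟨insert z Y, ⟨Finset.mem_insert_of_mem hY.1, ?_⟩, Finset.mem_insert_self _ _⟩
    have hsub : Y ⊆ insert z Y := Finset.subset_insert _ _
    intro y hy
    rcases Finset.mem_insert.1 hy with rfl | hy
    · exact Relation.ReflTransGen.tail (CC.mono hsub (hY.2 x hx))
        ⟨hxz, hsub hx, Finset.mem_insert_self _ _⟩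
    · exact CC.mono hsub (hY.2 y hy)
  have key : ∀ L : List (α × Bool), ∃ Y : Finset (FreeGroup α), Conn Y ∧
      FreeGroup.mk L.reverse ∈ Y := by
    intro L
    induction L with
    | nil =>
      refine ⟨{1}, ⟨by simp, fun y hy => ?_⟩, by simp [← FreeGroup.one_eq_mk]⟩
      rw [Finset.mem_singleton.1 hy]; exact Relation.ReflTransGen.refl
    | cons c L ih =>
      obtain ⟨Y, hY, hm⟩ := ih
      refine hadd Y _ _ hY hm ?_
      rw [List.reverse_cons, ← FreeGroup.mul_mk]
      rcases c with ⟨a, b⟩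
      cases b
      · right
        refine ⟨a, ?_⟩
        have : FreeGroup.mk [(a, false)] = (FreeGroup.of a)⁻¹ := by
          simp [FreeGroup.of, FreeGroup.inv_mk, FreeGroup.invRev]
        rw [this]; group
      · exact Or.inl ⟨a, rfl⟩
  have := key (x.toWord.reverse)
  rwa [List.reverse_reverse, FreeGroup.mk_toWord] at this

theorem exists_conn_finset (Z : Finset (FreeGroup α)) :
    ∃ Y : Finset (FreeGroup α), Conn Y ∧ Z ⊆ Y := by
  classical
  induction Z using Finset.induction_on with
  | empty =>
    obtain ⟨Y, hY, -⟩ := exists_conn (1 : FreeGroup α)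
    exact ⟨Y, hY, by simp⟩
  | insert z Z hz ih =>
    obtain ⟨Y, hY, hZ⟩ := ih
    obtain ⟨Y2, hY2, hz2⟩ := exists_conn z
    refine ⟨Y ∪ Y2, ⟨Finset.mem_union_left _ hY.1, ?_⟩, ?_⟩
    · intro y hy
      rcases Finset.mem_union.1 hy with hy | hy
      · exact CC.mono Finset.subset_union_left (hY.2 y hy)
      · exact CC.mono Finset.subset_union_right (hY2.2 y hy)
    · rw [Finset.insert_subset_iff]
      exact ⟨Finset.mem_union_right _ hz2, hZ.trans Finset.subset_union_left⟩

theorem nielsen_reduce [Nonempty α] (S : Fin n → FreeGroup α)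
    (hgen : Subgroup.closure (Set.range S) = ⊤) :
    ∃ S', NielsenEquiv S S' ∧ ∀ i, S' i = 1 ∨ ∃ a, S' i = FreeGroup.of a := by
  classical
  obtain ⟨a0⟩ := ‹Nonempty α›
  obtain ⟨Y, hY, hZ⟩ := exists_conn_finset
    (Finset.univ.image (fun i => S i * (FreeGroup.of a0)⁻¹))
  refine reduce_all Y.card Y le_rfl hY S (fun i => Or.inr ?_) hgen
  refine ⟨S i * (FreeGroup.of a0)⁻¹, hZ (Finset.mem_image_of_mem _ (Finset.mem_univ i)), 1, hY.1, a0, ?_⟩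
  group

end Free

/-- Every generating tuple of the free group of rank `p` is Nielsen equivalent to the standard
one. -/
theorem free_standard {p n : ℕ} (hp : 0 < p) (S : Fin n → FreeGroup (Fin p))
    (hgen : Subgroup.closure (Set.range S) = ⊤) :
    p ≤ n ∧ NielsenEquiv S (fun i => if h : (i : ℕ) < p then FreeGroup.of ⟨(i : ℕ), h⟩ else 1) := by
  classical
  have : Nonempty (Fin p) := ⟨⟨0, hp⟩⟩
  obtain ⟨S', h1, h2⟩ := nielsen_reduce S hgen
  have hgen' := NE.closure_eq_top h1 hgen
  have hex : ∀ j : Fin p, ∃ i, S' i = FreeGroup.of j := by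
    intro j
    by_contra hno
    push Not at hno
    let f : FreeGroup (Fin p) →* Multiplicative ℤ :=
      FreeGroup.lift (fun a => if a = j then Multiplicative.ofAdd 1 else 1)
    have hf : ∀ x, f x = 1 := by
      intro x
      have hx : x ∈ Subgroup.closure (Set.range S') := by rw [hgen']; trivial
      have hle : Subgroup.closure (Set.range S') ≤ f.ker := by
        rw [Subgroup.closure_le]
        rintro _ ⟨i, rfl⟩
        show S' i ∈ f.ker
        rw [MonoidHom.mem_ker]
        rcases h2 i with h | ⟨a, h⟩
        · simp [h]
        · have : a ≠ j := by rintro rfl; exact hno i h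
          simp [h, f, this]
      exact MonoidHom.mem_ker.1 (hle hx)
    have := hf (FreeGroup.of j)
    simp [f] at this
  choose c hc using hex
  have hcinj : Function.Injective c := by
    intro j j' h
    have : FreeGroup.of j = FreeGroup.of j' := by rw [← hc j, ← hc j', h]
    exact FreeGroup.of_injective this
  have hpn : p ≤ n := by simpa using Fintype.card_le_of_injective c hcinj
  refine ⟨hpn, NE.trans h1 ?_⟩
  -- clear the other entries
  have key : ∀ A : Finset (Fin n), (∀ i ∈ A, i ∉ Set.range c) →
      NielsenEquiv S' (fun i => if i ∈ A then 1 else S' i) := by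
    intro A
    induction A using Finset.induction_on with
    | empty => intro _; simpa using NE.refl S'
    | insert b A hb ih =>
      intro hA
      have hbc := hA b (Finset.mem_insert_self _ _)
      have hA' : ∀ i ∈ A, i ∉ Set.range c := fun i hi => hA i (Finset.mem_insert_of_mem hi)
      refine NE.trans (ih hA') ?_
      rcases h2 b with h | ⟨a, h⟩
      · convert NE.refl _ using 1
        funext k
        by_cases hk : k = b
        · subst hk; simp [h]
        · simp [hk]
      · have hne : b ≠ c a := fun e => hbc ⟨a, e.symm⟩
        have hcA : c a ∉ A := fun hh => hA' _ hh ⟨a, rfl⟩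
        convert NE.mulRinv _ b (c a) hne using 1
        funext k
        by_cases hk : k = b
        · subst hk; simp [hb, hcA, h, hc]
        · simp [hk]
  refine NE.trans (key (Finset.univ.filter (fun i => i ∉ Set.range c)) (by simp)) ?_
  -- permute
  let e0 : Fin p → Fin n := Fin.castLE hpn
  have he0 : Function.Injective e0 := Fin.castLE_injective hpn
  obtain ⟨σ, hσ⟩ := perm_ext (fun x y => ∃ j, e0 j = x ∧ c j = y) Set.univ Set.finite_univ
    (fun _ _ _ => ⟨trivial, trivial⟩)
    (by rintro x y y' ⟨j, rfl, rfl⟩ ⟨j', h, rfl⟩; rw [he0 h])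
    (by rintro x x' y ⟨j, rfl, rfl⟩ ⟨j', rfl, h⟩; rw [hcinj h])
  convert NE.perm _ σ using 1
  funext i
  by_cases hi : (i : ℕ) < p
  · have h3 : σ i = c ⟨i, hi⟩ := hσ _ _ ⟨⟨i, hi⟩, by ext; rfl, rfl⟩
    simp [hi, h3, hc]
  · have h3 : σ i ∉ Set.range c := by
      rintro ⟨j, hj⟩
      have := hσ _ _ ⟨j, rfl, rfl⟩
      have h4 : i = e0 j := σ.injective (hj.symm.trans this.symm)
      apply hi; rw [h4]; exact j.2
    have h4 : ∀ x, ¬ c x = σ i := fun x hx => h3 ⟨x, hx⟩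
    simp [hi, h4]


section Machine
variable {p n : ℕ} [NeZero p]

/-- The `s`-th letter (cyclically) of the surface relator. -/
def rl (p : ℕ) [NeZero p] (s : ℕ) : Fin p := ⟨(s / 2) % p, Nat.mod_lt _ (NeZero.pos p)⟩

def rlist (p : ℕ) [NeZero p] : List (Fin p) := (List.range (2 * p)).map (rl p)

/-- Data of a labelled graph with cells. -/
structure St (n : ℕ) (X V I : Type) where
  E : Finset X
  J : Finset I
  src : X → V
  tgt : X → V
  cell : I → ℕ → X
  S : Fin n → FreeGroup X
  q : V → FreeGroup X
  k : I → FreeGroup X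

variable {X V I : Type} [DecidableEq X] [DecidableEq V] [DecidableEq I]
variable {G : Type} [Group G]

def cw (p : ℕ) (cell : I → ℕ → X) (j : I) : FreeGroup X :=
  ((List.range (2 * p)).map fun s => FreeGroup.of (cell j s)).prod

def wt (p : ℕ) (cell : I → ℕ → X) (J : Finset I) (x : X) : ZMod 2 :=
  ∑ j ∈ J, ∑ s ∈ Finset.range (2 * p), if cell j s = x then 1 else 0

def Closed (lab : X → Fin p) (src tgt : X → V) (E : Finset X) (r : Setoid V) : Prop :=
  ∀ e ∈ E, ∀ f ∈ E, lab e = lab f → (r (src e) (src f) ↔ r (tgt e) (tgt f))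

def St.A (p : ℕ) (st : St n X V I) : Subgroup (FreeGroup X) :=
  Subgroup.closure (Set.range st.S ∪ {x | ∃ j ∈ st.J, x = st.k j * cw p st.cell j * (st.k j)⁻¹})

structure Valid (π : FreeGroup (Fin p) →* G) (T : Fin n → G) (lab : X → Fin p)
    (st : St n X V I) : Prop where
  mem : ∀ j ∈ st.J, ∀ s, st.cell j s ∈ st.E
  per : ∀ j ∈ st.J, ∀ s, st.cell j (s + 2 * p) = st.cell j s
  labc : ∀ j ∈ st.J, ∀ s, lab (st.cell j s) = rl p s
  path : ∀ j ∈ st.J, ∀ s, st.tgt (st.cell j s) = st.src (st.cell j (s + 1))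
  inj : ∀ j ∈ st.J, ∀ j' ∈ st.J, ∀ s, st.cell j s = st.cell j' s → j = j'
  indep : ∀ J', J' ⊆ st.J → J'.Nonempty → ∃ x, wt p st.cell J' x ≠ 0
  gen : ∀ e ∈ st.E, st.q (st.src e) * FreeGroup.of e * (st.q (st.tgt e))⁻¹ ∈ st.A p
  lift : ∀ i, π (FreeGroup.map lab (st.S i)) = T i
  tot : ∀ r, Closed lab st.src st.tgt st.E r → ∀ e ∈ st.E, ∀ f ∈ st.E,
    r (st.src e) (st.src f) ∧ r (st.src e) (st.tgt f)
  labs : ∀ a, ∃ e ∈ st.E, lab e = a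

def Redundant (lab : X → Fin p) (st : St n X V I) (e : X) : Prop :=
  ∀ r, Closed lab st.src st.tgt (st.E.erase e) r → ∃ g ∈ st.E.erase e, lab g = lab e ∧
    r (st.src e) (st.src g) ∧ r (st.tgt e) (st.tgt g)

def Full (lab : X → Fin p) (st : St n X V I) (e : X) : Prop :=
  ∀ s, rl p s = lab e → ∃ j ∈ st.J, st.cell j s = e

theorem cw_congr (cell cell' : I → ℕ → X) (j : I) (f : FreeGroup X →* FreeGroup X)
    (h : ∀ s, f (FreeGroup.of (cell j s)) = FreeGroup.of (cell' j s)) :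
    f (cw p cell j) = cw p cell' j := by
  unfold cw
  rw [map_list_prod, List.map_map]
  congr 1
  apply List.map_congr_left
  intro s _
  exact h s

theorem map_cw (lab : X → Fin p) (cell : I → ℕ → X) (j : I) (h : ∀ s, lab (cell j s) = rl p s) :
    FreeGroup.map lab (cw p cell j) = ((rlist p).map FreeGroup.of).prod := by
  unfold cw rlist
  rw [map_list_prod, List.map_map, List.map_map]
  congr 1
  apply List.map_congr_left
  intro s _
  simp [h s]

theorem remove_valid {π : FreeGroup (Fin p) →* G} {T : Fin n → G} {lab : X → Fin p}
    {st : St n X V I} (hv : Valid π T lab st) (e : X) (he : e ∈ st.E) (hr : Redundant lab st e)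
    (ρ : FreeGroup X →* FreeGroup X) (hρ : ∀ x, x ≠ e → ρ (FreeGroup.of x) = FreeGroup.of x)
    (J' : Finset I) (hJ : J' ⊆ st.J) (hJe : ∀ j ∈ J', ∀ s, st.cell j s ≠ e)
    (hJ1 : ∀ j ∈ st.J, j ∉ J' → ρ (cw p st.cell j) = 1)
    (hπ : ∀ x, π (FreeGroup.map lab (ρ x)) = π (FreeGroup.map lab x)) :
    Valid π T lab { st with
      E := st.E.erase e, J := J', S := fun i => ρ (st.S i), q := fun v => ρ (st.q v),
      k := fun j => ρ (st.k j) } where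
  mem := fun j hj s => Finset.mem_erase.2 ⟨hJe j hj s, hv.mem j (hJ hj) s⟩
  per := fun j hj => hv.per j (hJ hj)
  labc := fun j hj => hv.labc j (hJ hj)
  path := fun j hj => hv.path j (hJ hj)
  inj := fun j hj j' hj' => hv.inj j (hJ hj) j' (hJ hj')
  indep := fun J'' h => hv.indep J'' (h.trans hJ)
  gen := by
    intro x hx
    have h1 := hv.gen x (Finset.mem_of_mem_erase hx)
    have h2 : ρ (st.q (st.src x) * FreeGroup.of x * (st.q (st.tgt x))⁻¹) ∈ (st.A p).map ρ :=
      Subgroup.mem_map_of_mem _ h1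
    rw [map_mul, map_mul, map_inv, hρ x (Finset.ne_of_mem_erase hx)] at h2
    refine (?_ : (st.A p).map ρ ≤ _) h2
    unfold St.A
    rw [MonoidHom.map_closure, Subgroup.closure_le]
    rintro _ ⟨y, hy, rfl⟩
    rcases hy with ⟨i, rfl⟩ | ⟨j, hj, rfl⟩
    · exact Subgroup.subset_closure (Or.inl ⟨i, rfl⟩)
    · by_cases hj' : j ∈ J'
      · refine Subgroup.subset_closure (Or.inr ⟨j, hj', ?_⟩)
        rw [map_mul, map_mul, map_inv, cw_congr st.cell st.cell j ρ]
        intro s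
        exact hρ _ (hJe j hj' s)
      · rw [map_mul, map_mul, map_inv, hJ1 j hj hj']
        simp
  lift := fun i => by rw [← hv.lift i]; exact hπ _
  tot := by
    intro r hc x hx y hy
    refine hv.tot r ?_ x (Finset.mem_of_mem_erase hx) y (Finset.mem_of_mem_erase hy)
    obtain ⟨g, hg, hgl, hs, ht⟩ := hr r hc
    have key : ∀ x ∈ st.E, ∃ x' ∈ st.E.erase e, lab x' = lab x ∧
        r (st.src x) (st.src x') ∧ r (st.tgt x) (st.tgt x') := by
      intro x hx
      by_cases hxe : x = e
      · subst hxe; exact ⟨g, hg, hgl, hs, ht⟩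
      · exact ⟨x, Finset.mem_erase.2 ⟨hxe, hx⟩, rfl, r.refl _, r.refl _⟩
    intro x hx y hy hxy
    obtain ⟨x', hx', hl, hxs, hxt⟩ := key x hx
    obtain ⟨y', hy', hl', hys, hyt⟩ := key y hy
    have := hc x' hx' y' hy' (by rw [hl, hl', hxy])
    constructor
    · intro h
      exact r.trans hxt (r.trans (this.1 (r.trans (r.symm hxs) (r.trans h hys))) (r.symm hyt))
    · intro h
      exact r.trans hxs (r.trans (this.2 (r.trans (r.symm hxt) (r.trans h hyt))) (r.symm hys))
  labs := by
    intro a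
    obtain ⟨x, hx, rfl⟩ := hv.labs a
    by_cases hxe : x = e
    · subst hxe
      obtain ⟨g, hg, hgl, -⟩ := hr ⊤ (fun _ _ _ _ _ => Iff.rfl)
      exact ⟨g, hg, hgl⟩
    · exact ⟨x, Finset.mem_erase.2 ⟨hxe, hx⟩, rfl⟩

theorem rl_eq_iff (s t : ℕ) (h : rl p s = rl p t) : s % (2 * p) = t % (2 * p) ∨
    (s % (2 * p) = 2 * ((t / 2) % p) + (1 - t % 2)) := by
  have h1 : (s / 2) % p = (t / 2) % p := congrArg Fin.val h
  rw [Nat.mod_mul, Nat.mod_mul, h1]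
  omega

theorem Valid.perm_mod {π : FreeGroup (Fin p) →* G} {T : Fin n → G} {lab : X → Fin p}
    {st : St n X V I} (hv : Valid π T lab st) (j : I) (hj : j ∈ st.J) (s : ℕ) :
    st.cell j (s % (2 * p)) = st.cell j s := by
  have : ∀ m t, st.cell j (t + 2 * p * m) = st.cell j t := by
    intro m
    induction m with
    | zero => intro t; rfl
    | succ m ih => intro t; rw [Nat.mul_succ, ← Nat.add_assoc, hv.per j hj, ih]
  conv_rhs => rw [← Nat.mod_add_div s (2 * p)]
  rw [this]

theorem occ {π : FreeGroup (Fin p) →* G} {T : Fin n → G} {lab : X → Fin p}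
    {st : St n X V I} (hv : Valid π T lab st) (e : X) (hf : ¬ Full lab st e) :
    ∃ s0, s0 < 2 * p ∧ ∀ j ∈ st.J, ∀ s, st.cell j s = e → s % (2 * p) = s0 := by
  have hp : 0 < p := NeZero.pos p
  unfold Full at hf
  push Not at hf
  obtain ⟨s2, h2, hno⟩ := hf
  refine ⟨2 * ((s2 / 2) % p) + (1 - s2 % 2), ?_, ?_⟩
  · have := Nat.mod_lt (s2 / 2) hp
    omega
  · intro j hj s hs
    have h3 : rl p s = rl p s2 := by rw [h2, ← hs, hv.labc j hj]
    rcases rl_eq_iff s s2 h3 with h | h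
    · exfalso
      apply hno j hj
      rw [← hv.perm_mod j hj, ← h, hv.perm_mod j hj, hs]
    · exact h

/-- Case 1: a redundant edge with a free side can be removed. -/
theorem case1 {π : FreeGroup (Fin p) →* G} {T : Fin n → G} {lab : X → Fin p}
    (hrel : π ((rlist p).map FreeGroup.of).prod = 1)
    {st : St n X V I} (hv : Valid π T lab st) (e : X) (he : e ∈ st.E) (hr : Redundant lab st e)
    (hf : ¬ Full lab st e) : ∃ st' : St n X V I, Valid π T lab st' ∧ st'.E.card < st.E.card := by
  have hcard : (st.E.erase e).card < st.E.card := Finset.card_erase_lt_of_mem he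
  obtain ⟨s0, hs0, hocc⟩ := occ hv e hf
  by_cases h0 : ∃ j ∈ st.J, st.cell j s0 = e
  · obtain ⟨j0, hj0, hj0e⟩ := h0
    obtain ⟨l1, l2, hl⟩ := List.append_of_mem (List.mem_range.2 hs0)
    have hnd : (l1 ++ s0 :: l2).Nodup := hl ▸ List.nodup_range
    have hne : ∀ s, s ∈ l1 ∨ s ∈ l2 → st.cell j0 s ≠ e := by
      intro s hs hse
      have h1 := hocc j0 hj0 s hse
      have h2 : s ∈ List.range (2 * p) := by
        rw [hl]; rcases hs with h | h <;> simp [h]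
      rw [Nat.mod_eq_of_lt (List.mem_range.1 h2)] at h1
      subst h1
      rw [List.nodup_middle, List.nodup_cons] at hnd
      rcases hs with h | h <;> simp [h] at hnd
    let x := (l1.map fun s => FreeGroup.of (st.cell j0 s)).prod
    let y := (l2.map fun s => FreeGroup.of (st.cell j0 s)).prod
    have hxy : cw p st.cell j0 = x * FreeGroup.of e * y := by
      unfold cw
      rw [hl]
      simp [x, y, hj0e, mul_assoc]
    let ρ : FreeGroup X →* FreeGroup X :=
      FreeGroup.lift (fun z => if z = e then x⁻¹ * y⁻¹ else FreeGroup.of z)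
    have hρ : ∀ z, z ≠ e → ρ (FreeGroup.of z) = FreeGroup.of z := by
      intro z hz; simp [ρ, hz]
    have hρe : ρ (FreeGroup.of e) = x⁻¹ * y⁻¹ := by simp [ρ]
    have hρx : ρ x = x := by
      simp only [x]
      rw [map_list_prod, List.map_map]
      congr 1
      apply List.map_congr_left
      intro s hs
      exact hρ _ (hne s (Or.inl hs))
    have hρy : ρ y = y := by
      simp only [y]
      rw [map_list_prod, List.map_map]
      congr 1
      apply List.map_congr_left
      intro s hs
      exact hρ _ (hne s (Or.inr hs))
    refine ⟨_, remove_valid hv e he hr ρ hρ (st.J.erase j0) (Finset.erase_subset _ _) ?_ ?_ ?_,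
      hcard⟩
    · intro j hj s hs
      have hjJ := Finset.mem_of_mem_erase hj
      apply Finset.ne_of_mem_erase hj
      apply hv.inj j hjJ j0 hj0 s0
      rw [hj0e, ← hs, ← hv.perm_mod j hjJ s, hocc j hjJ s hs]
    · intro j hj hj'
      have : j = j0 := by
        by_contra hne'
        exact hj' (Finset.mem_erase.2 ⟨hne', hj⟩)
      subst this
      rw [hxy, map_mul, map_mul, hρx, hρy, hρe]; group
    · intro z
      have : (π.comp (FreeGroup.map lab)).comp ρ = π.comp (FreeGroup.map lab) := by
        apply FreeGroup.ext_hom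
        intro z
        by_cases hz : z = e
        · subst hz
          have h1 : π (FreeGroup.map lab (x * FreeGroup.of z * y)) = 1 := by
            rw [← hxy, map_cw lab st.cell j0 (hv.labc j0 hj0), hrel]
          rw [map_mul, map_mul, map_mul, map_mul] at h1
          simp only [MonoidHom.comp_apply]
          rw [hρe, map_mul, map_mul, map_inv, map_inv, map_inv, map_inv]
          rw [mul_eq_one_iff_eq_inv] at h1
          rw [← h1]; group
        · simp only [MonoidHom.comp_apply]; rw [hρ z hz]
      exact DFunLike.congr_fun this z
  · have h0' : ∀ j ∈ st.J, ∀ s, st.cell j s ≠ e := by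
      intro j hj s hs
      apply h0
      refine ⟨j, hj, ?_⟩
      rw [← hocc j hj s hs, hv.perm_mod j hj, hs]
    obtain ⟨g, hg, hgl, -⟩ := hr ⊤ (fun _ _ _ _ _ => Iff.rfl)
    let ρ : FreeGroup X →* FreeGroup X :=
      FreeGroup.lift (fun z => if z = e then FreeGroup.of g else FreeGroup.of z)
    have hρ : ∀ z, z ≠ e → ρ (FreeGroup.of z) = FreeGroup.of z := by
      intro z hz; simp [ρ, hz]
    refine ⟨_, remove_valid hv e he hr ρ hρ st.J (Finset.Subset.refl _) h0'
      (fun j hj hj' => absurd hj hj') ?_, hcard⟩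
    intro z
    have : (π.comp (FreeGroup.map lab)).comp ρ = π.comp (FreeGroup.map lab) := by
      apply FreeGroup.ext_hom
      intro z
      by_cases hz : z = e
      · subst hz; simp [ρ, hgl]
      · simp only [MonoidHom.comp_apply]; rw [hρ z hz]
    exact DFunLike.congr_fun this z

end Machine


section Machine2
variable {p n : ℕ} [NeZero p]
variable {X V I : Type} [DecidableEq X] [DecidableEq V] [DecidableEq I]
variable {G : Type} [Group G]

theorem telescope (N : ℕ) (a : ℕ → ZMod 2) :
    ∑ s ∈ Finset.range N, (a s + a (s + 1)) = a 0 + a N := by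
  induction N with
  | zero => simp [CharTwo.add_self_eq_zero]
  | succ N ih =>
    rw [Finset.sum_range_succ, ih]
    have := CharTwo.add_self_eq_zero (a N)
    linear_combination this

theorem wt_sum (cell : I → ℕ → X) (J : Finset I) (E : Finset X)
    (hE : ∀ j ∈ J, ∀ s, cell j s ∈ E) (F : X → ZMod 2) :
    ∑ x ∈ E, wt p cell J x * F x = ∑ j ∈ J, ∑ s ∈ Finset.range (2 * p), F (cell j s) := by
  unfold wt
  simp_rw [Finset.sum_mul]
  rw [Finset.sum_comm]
  apply Finset.sum_congr rfl
  intro j hj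
  rw [Finset.sum_comm]
  apply Finset.sum_congr rfl
  intro s _
  simp [hE j hj s]

theorem parity {π : FreeGroup (Fin p) →* G} {T : Fin n → G} {lab : X → Fin p}
    {st : St n X V I} (hv : Valid π T lab st) (J' : Finset I) (hJ : J' ⊆ st.J) (φ : V → ZMod 2) :
    ∑ x ∈ st.E, wt p st.cell J' x * (φ (st.src x) + φ (st.tgt x)) = 0 := by
  rw [wt_sum st.cell J' st.E (fun j hj => hv.mem j (hJ hj)) (fun x => φ (st.src x) + φ (st.tgt x))]
  apply Finset.sum_eq_zero
  intro j hj
  have h1 : ∀ s, φ (st.src (st.cell j s)) + φ (st.tgt (st.cell j s)) =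
      φ (st.src (st.cell j s)) + φ (st.src (st.cell j (s + 1))) := by
    intro s; rw [hv.path j (hJ hj)]
  simp_rw [h1]
  rw [telescope (2 * p) (fun s => φ (st.src (st.cell j s)))]
  have h2 := hv.per j (hJ hj) 0
  rw [Nat.zero_add] at h2
  rw [h2]
  exact CharTwo.add_self_eq_zero _

/-- Case 2: folding. -/
theorem case2 {π : FreeGroup (Fin p) →* G} {T : Fin n → G} {lab : X → Fin p}
    {st : St n X V I} (hv : Valid π T lab st) (e' e'' : X) (he' : e' ∈ st.E) (he'' : e'' ∈ st.E)
    (hne : e' ≠ e'') (hl : lab e' = lab e'') (Q' Q'' : V) (hQ : Q' ≠ Q'')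
    (hend : (st.src e' = st.src e'' ∧ st.tgt e' = Q' ∧ st.tgt e'' = Q'') ∨
      (st.tgt e' = st.tgt e'' ∧ st.src e' = Q' ∧ st.src e'' = Q''))
    (f : X → X) (hf : f = fun x => if x = e'' then e' else x)
    (hinj : ∀ j ∈ st.J, ∀ j' ∈ st.J, ∀ s, f (st.cell j s) = f (st.cell j' s) → j = j') :
    ∃ st' : St n X V I, Valid π T lab st' ∧ st'.E.card < st.E.card := by
  have hcard : (st.E.erase e'').card < st.E.card := Finset.card_erase_lt_of_mem he''
  have hfe : f e'' = e' := by simp [hf]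
  have hfx : ∀ x, x ≠ e'' → f x = x := by intro x hx; simp [hf, hx]
  have hfE : ∀ x ∈ st.E, f x ∈ st.E.erase e'' := by
    intro x hx
    by_cases h : x = e''
    · rw [h, hfe]; exact Finset.mem_erase.2 ⟨hne, he'⟩
    · rw [hfx x h]; exact Finset.mem_erase.2 ⟨h, hx⟩
  have hfl : ∀ x, lab (f x) = lab x := by
    intro x
    by_cases h : x = e''
    · rw [h, hfe, hl]
    · rw [hfx x h]
  let θ : V → V := fun v => if v = Q'' then Q' else v
  have hθQ : θ Q'' = Q' := by simp [θ]
  have hθQ' : θ Q' = Q' := by simp [θ]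
  have hθx : ∀ v, v ≠ Q'' → θ v = v := by intro v h; simp [θ, h]
  have hsf : ∀ x, θ (st.src (f x)) = θ (st.src x) := by
    intro x
    by_cases h : x = e''
    · subst h; rw [hfe]
      rcases hend with h | h
      · rw [h.1]
      · rw [h.2.1, h.2.2, hθQ, hθQ']
    · rw [hfx x h]
  have htf : ∀ x, θ (st.tgt (f x)) = θ (st.tgt x) := by
    intro x
    by_cases h : x = e''
    · subst h; rw [hfe]
      rcases hend with h | h
      · rw [h.2.1, h.2.2, hθQ, hθQ']
      · rw [h.1]
    · rw [hfx x h]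
  let g : FreeGroup X →* FreeGroup X := FreeGroup.map f
  let st' : St n X V I :=
    { E := st.E.erase e'', J := st.J, src := fun x => θ (st.src x), tgt := fun x => θ (st.tgt x)
      cell := fun j s => f (st.cell j s), S := fun i => g (st.S i), q := fun v => g (st.q v)
      k := fun j => g (st.k j) }
  have hA : ∀ x ∈ st.A p, g x ∈ st'.A p := by
    intro x hx
    have h2 : g x ∈ (st.A p).map g := Subgroup.mem_map_of_mem _ hx
    refine (?_ : (st.A p).map g ≤ _) h2
    unfold St.A
    rw [MonoidHom.map_closure, Subgroup.closure_le]
    rintro _ ⟨y, hy, rfl⟩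
    rcases hy with ⟨i, rfl⟩ | ⟨j, hj, rfl⟩
    · exact Subgroup.subset_closure (Or.inl ⟨i, rfl⟩)
    · refine Subgroup.subset_closure (Or.inr ⟨j, hj, ?_⟩)
      rw [map_mul, map_mul, map_inv, cw_congr st.cell st'.cell j g]
      intro s
      simp [g, st']
  have hge : ∀ x ∈ st.E, g (st.q (st.src x)) * FreeGroup.of (f x) * (g (st.q (st.tgt x)))⁻¹ ∈
      st'.A p := by
    intro x hx
    have := hA _ (hv.gen x hx)
    rw [map_mul, map_mul, map_inv] at this
    simpa [g] using this
  have hQQ : g (st.q Q') * (g (st.q Q''))⁻¹ ∈ st'.A p := by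
    have h1 := hge e' he'
    have h2 := hge e'' he''
    rw [hfx e' hne] at h1
    rw [hfe] at h2
    rcases hend with h | h
    · rw [h.1, h.2.1] at h1
      rw [h.2.2] at h2
      convert mul_mem (inv_mem h1) h2 using 1
      group
    · rw [h.1, h.2.1] at h1
      rw [h.2.2] at h2
      convert mul_mem h1 (inv_mem h2) using 1
      group
  have hθA : ∀ v, g (st.q (θ v)) * (g (st.q v))⁻¹ ∈ st'.A p := by
    intro v
    by_cases h : v = Q''
    · rw [h, hθQ]; exact hQQ
    · rw [hθx v h, mul_inv_cancel]; exact one_mem _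
  refine ⟨st', ?_, hcard⟩
  refine ⟨?_, ?_, ?_, ?_, ?_, ?_, ?_, ?_, ?_, ?_⟩
  · exact fun j hj s => hfE _ (hv.mem j hj s)
  · intro j hj s
    show f (st.cell j (s + 2 * p)) = f (st.cell j s)
    rw [hv.per j hj]
  · intro j hj s
    show lab (f (st.cell j s)) = _
    rw [hfl, hv.labc j hj]
  · intro j hj s
    show θ (st.tgt (f (st.cell j s))) = θ (st.src (f (st.cell j (s + 1))))
    rw [htf, hsf, hv.path j hj]
  · exact hinj
  · intro J' hJ' hne'
    by_contra hno
    push Not at hno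
    obtain ⟨x0, hx0⟩ := hv.indep J' hJ' hne'
    have hother : ∀ x, x ≠ e' → x ≠ e'' → wt p st.cell J' x = 0 := by
      intro x h1 h2
      rw [← hno x]
      unfold wt
      apply Finset.sum_congr rfl; intro j _
      apply Finset.sum_congr rfl; intro s _
      have : (st.cell j s = x) ↔ (st'.cell j s = x) := by
        show _ ↔ f (st.cell j s) = x
        by_cases h : st.cell j s = e''
        · rw [h, hfe]
          exact ⟨fun h => absurd h.symm h2, fun h => absurd h.symm h1⟩
        · rw [hfx _ h]
      simp only [this]
    have hsum : wt p st.cell J' e' + wt p st.cell J' e'' = 0 := by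
      rw [← hno e']
      unfold wt
      rw [← Finset.sum_add_distrib]
      apply Finset.sum_congr rfl; intro j _
      rw [← Finset.sum_add_distrib]
      apply Finset.sum_congr rfl; intro s _
      show _ = if f (st.cell j s) = e' then _ else _
      by_cases h : st.cell j s = e''
      · rw [h, hfe]; simp [hne.symm]
      · rw [hfx _ h]; simp [h]
    have hw : wt p st.cell J' e' = 1 ∧ wt p st.cell J' e'' = 1 := by
      have hz : ∀ a b : ZMod 2, a + b = 0 → (a ≠ 0 ∨ b ≠ 0) → a = 1 ∧ b = 1 := by decide
      apply hz _ _ hsum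
      by_cases h1 : x0 = e'
      · left; rw [← h1]; exact hx0
      · by_cases h2 : x0 = e''
        · right; rw [← h2]; exact hx0
        · exact absurd (hother x0 h1 h2) hx0
    have hpar := parity hv J' hJ' (fun v => if v = Q'' then 1 else 0)
    have hsub : ({e', e''} : Finset X) ⊆ st.E := by
      intro x hx
      rcases Finset.mem_insert.1 hx with rfl | hx
      · exact he'
      · rw [Finset.mem_singleton.1 hx]; exact he''
    rw [← Finset.sum_subset hsub, Finset.sum_pair hne, hw.1, hw.2] at hpar
    · simp only [one_mul] at hpar
      rcases hend with h | h
      · rw [h.1, h.2.1, h.2.2] at hpar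
        simp only [hQ, if_false, if_true] at hpar
        generalize (if st.src e'' = Q'' then (1 : ZMod 2) else 0) = a at hpar
        revert hpar; revert a; decide
      · rw [h.1, h.2.1, h.2.2] at hpar
        simp only [hQ, if_false, if_true] at hpar
        generalize (if st.tgt e'' = Q'' then (1 : ZMod 2) else 0) = a at hpar
        revert hpar; revert a; decide
    · intro x _ hx
      rw [hother x (fun h => hx (by simp [h])) (fun h => hx (by simp [h])), zero_mul]
  · intro x hx
    show g (st.q (θ (st.src x))) * FreeGroup.of x * (g (st.q (θ (st.tgt x))))⁻¹ ∈ _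
    have h1 := hge x (Finset.mem_of_mem_erase hx)
    rw [hfx x (Finset.ne_of_mem_erase hx)] at h1
    convert mul_mem (mul_mem (hθA (st.src x)) h1) (inv_mem (hθA (st.tgt x))) using 1
    group
  · intro i
    rw [← hv.lift i]
    have : (FreeGroup.map lab).comp g = FreeGroup.map lab := by
      apply FreeGroup.ext_hom
      intro x
      simp [g, hfl]
    exact congrArg π (DFunLike.congr_fun this (st.S i))
  · intro r hr x hx y hy
    have := hv.tot (r.comap θ) ?_ x (Finset.mem_of_mem_erase hx) y (Finset.mem_of_mem_erase hy)
    · exact this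
    · intro x hx y hy hxy
      have := hr (f x) (hfE x hx) (f y) (hfE y hy) (by rw [hfl, hfl, hxy])
      show r (θ (st.src x)) (θ (st.src y)) ↔ r (θ (st.tgt x)) (θ (st.tgt y))
      rw [← hsf x, ← hsf y, ← htf x, ← htf y]
      exact this
  · intro a
    obtain ⟨x, hx, rfl⟩ := hv.labs a
    exact ⟨f x, hfE x hx, hfl x⟩

theorem around (h : ℕ → Prop) (N s0 s1 : ℕ) (hN : s0 < N) (hper : ∀ s, h (s + N) ↔ h s)
    (hstep : ∀ s, s % N ≠ s0 → (h s ↔ h (s + 1))) (h1 : h s1) : ∀ s, h s := by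
  have hmod : ∀ s, h s ↔ h (s % N) := by
    intro s
    have : ∀ m t, h (t + N * m) ↔ h t := by
      intro m
      induction m with
      | zero => intro t; rfl
      | succ m ih => intro t; rw [Nat.mul_succ, ← Nat.add_assoc, hper, ih]
    conv_lhs => rw [← Nat.mod_add_div s N]
    rw [this]
  have hd : ∀ d, d < N → (h (s0 + 1 + d) ↔ h (s0 + 1)) := by
    intro d
    induction d with
    | zero => intro _; rfl
    | succ d ih =>
      intro hdN
      rw [← ih (by omega)]
      refine (hstep (s0 + 1 + d) ?_).symm
      intro hc
      by_cases hlt : s0 + 1 + d < N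
      · rw [Nat.mod_eq_of_lt hlt] at hc; omega
      · rw [Nat.mod_eq_sub_mod (by omega), Nat.mod_eq_of_lt (by omega)] at hc; omega
  have hall : ∀ s, h s ↔ h (s0 + 1) := by
    intro s
    rw [hmod s]
    have hlt : s % N < N := Nat.mod_lt _ (by omega)
    generalize s % N = t at hlt
    by_cases hts : s0 + 1 ≤ t
    · rw [← hd (t - (s0 + 1)) (by omega)]
      rw [Nat.add_sub_cancel' hts]
    · rw [← hper t, ← hd (t + N - (s0 + 1)) (by omega)]
      rw [Nat.add_sub_cancel' (by omega)]
  intro s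
  rw [hall s, ← hall s1]; exact h1

theorem pair_sum (N : ℕ) (o : ℕ → ZMod 2) (h : ∀ i, o (2 * i) = o (2 * i + 1)) :
    ∑ s ∈ Finset.range (2 * N), o s = 0 := by
  induction N with
  | zero => simp
  | succ N ih =>
    rw [Nat.mul_succ, Finset.sum_range_succ, Finset.sum_range_succ, ih, h N, zero_add]
    exact CharTwo.add_self_eq_zero _

/-- Pairs of cells reached from a conflicting pair. -/
inductive MP (st : St n X V I) (C' C'' : I) : I → I → Prop
  | base : MP st C' C'' C' C''
  | step (B B'' D D'' : I) (s s' : ℕ) : MP st C' C'' B B'' → D ∈ st.J → D'' ∈ st.J →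
      st.cell D s' = st.cell B s → st.cell D'' s' = st.cell B'' s → MP st C' C'' D D''

theorem MP.prop {π : FreeGroup (Fin p) →* G} {T : Fin n → G} {lab : X → Fin p}
    {st : St n X V I} (hv : Valid π T lab st) {C' C'' : I} (hC' : C' ∈ st.J) (hC'' : C'' ∈ st.J)
    (hne : C' ≠ C'') {B B'' : I} (h : MP st C' C'' B B'') : B ∈ st.J ∧ B'' ∈ st.J ∧ B ≠ B'' := by
  induction h with
  | base => exact ⟨hC', hC'', hne⟩
  | step B B'' D D'' s s' _ hD hD'' h1 h2 ih =>
    refine ⟨hD, hD'', ?_⟩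
    rintro rfl
    exact ih.2.2 (hv.inj B ih.1 B'' ih.2.1 s (h1.symm.trans h2))

theorem rl_pair (i : ℕ) : rl p (2 * i) = rl p (2 * i + 1) := by
  unfold rl
  congr 2
  omega

/-- If every redundant edge is full, there is no conflicting pair of cells. -/
theorem case3 {π : FreeGroup (Fin p) →* G} {T : Fin n → G} {lab : X → Fin p}
    {st : St n X V I} (hv : Valid π T lab st)
    (hfull : ∀ e ∈ st.E, Redundant lab st e → Full lab st e)
    {C' C'' : I} (hC' : C' ∈ st.J) (hC'' : C'' ∈ st.J) (hne : C' ≠ C'') (s1 : ℕ)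
    (hs1 : st.src (st.cell C' s1) = st.src (st.cell C'' s1)) : False := by
  classical
  have hM : ∀ {B B''}, MP st C' C'' B B'' → B ∈ st.J ∧ B'' ∈ st.J ∧ B ≠ B'' :=
    fun h => MP.prop hv hC' hC'' hne h
  -- relatedness along all pairs
  have hrel : ∀ (f : X) (_ : ¬ Full lab st f) (r : Setoid V)
      (_ : Closed lab st.src st.tgt (st.E.erase f) r) (B B'' : I), MP st C' C'' B B'' →
      ∀ s, r (st.src (st.cell B s)) (st.src (st.cell B'' s)) := by
    intro f hf r hr B B'' hB
    obtain ⟨s0, hs0, hocc⟩ := occ hv f hf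
    have hgo : ∀ D ∈ st.J, ∀ D'' ∈ st.J, ∀ s1,
        r (st.src (st.cell D s1)) (st.src (st.cell D'' s1)) →
        ∀ s, r (st.src (st.cell D s)) (st.src (st.cell D'' s)) := by
      intro D hD D'' hD'' s1 h1
      refine around (fun s => r (st.src (st.cell D s)) (st.src (st.cell D'' s))) (2 * p) s0 s1 hs0
        ?_ ?_ h1
      · intro s
        simp only [hv.per D hD, hv.per D'' hD'']
      · intro s hs
        rw [← hv.path D hD, ← hv.path D'' hD'']
        apply hr
        · exact Finset.mem_erase.2 ⟨fun h => hs (hocc D hD s h), hv.mem D hD s⟩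
        · exact Finset.mem_erase.2 ⟨fun h => hs (hocc D'' hD'' s h), hv.mem D'' hD'' s⟩
        · rw [hv.labc D hD, hv.labc D'' hD'']
    induction hB with
    | base => exact hgo C' hC' C'' hC'' s1 (by rw [hs1])
    | step B B'' D D'' s s' hB hD hD'' h1 h2 ih =>
      refine hgo D hD D'' hD'' s' ?_
      rw [h1, h2]; exact ih s
  have hfl : ∀ B B'', MP st C' C'' B B'' → ∀ s, Full lab st (st.cell B s) ∧
      Full lab st (st.cell B'' s) := by
    intro B B'' hB s
    obtain ⟨hBJ, hBJ'', hBne⟩ := hM hB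
    have hcne : st.cell B s ≠ st.cell B'' s := fun h => hBne (hv.inj B hBJ B'' hBJ'' s h)
    constructor
    · by_contra hnf
      apply hnf
      apply hfull _ (hv.mem B hBJ s)
      intro r hr
      have h := hrel _ hnf r hr B B'' hB
      refine ⟨st.cell B'' s, Finset.mem_erase.2 ⟨hcne.symm, hv.mem B'' hBJ'' s⟩, ?_, h s, ?_⟩
      · rw [hv.labc B hBJ, hv.labc B'' hBJ'']
      · rw [hv.path B hBJ, hv.path B'' hBJ'']; exact h (s + 1)
    · by_contra hnf
      apply hnf
      apply hfull _ (hv.mem B'' hBJ'' s)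
      intro r hr
      have h := hrel _ hnf r hr B B'' hB
      refine ⟨st.cell B s, Finset.mem_erase.2 ⟨hcne, hv.mem B hBJ s⟩, ?_, r.symm (h s), ?_⟩
      · rw [hv.labc B hBJ, hv.labc B'' hBJ'']
      · rw [hv.path B hBJ, hv.path B'' hBJ'']; exact r.symm (h (s + 1))
  let BB : Finset I := st.J.filter (fun B => ∃ D, MP st C' C'' B D ∨ MP st C' C'' D B)
  have hBB : ∀ B, B ∈ BB ↔ B ∈ st.J ∧ ∃ D, MP st C' C'' B D ∨ MP st C' C'' D B := by
    intro B; simp [BB]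
  have hsub : BB ⊆ st.J := Finset.filter_subset _ _
  obtain ⟨x, hx⟩ := hv.indep BB hsub ⟨C', (hBB _).2 ⟨hC', C'', Or.inl .base⟩⟩
  -- moving a cell of `BB` to the other position
  have hmove : ∀ B ∈ BB, ∀ s t, rl p s = rl p t → st.cell B s = x →
      ∃ D ∈ BB, st.cell D t = x := by
    intro B hB s t hst hBx
    obtain ⟨hBJ, B2, h | h⟩ := (hBB B).1 hB
    · have hp := hM h
      obtain ⟨D, hD, hDx⟩ := (hfl _ _ h s).1 t (by rw [hv.labc B hBJ, hst])
      obtain ⟨D2, hD2, hDx2⟩ := (hfl _ _ h s).2 t (by rw [hv.labc B2 hp.2.1, hst])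
      refine ⟨D, (hBB D).2 ⟨hD, D2, Or.inl (.step B B2 D D2 s t h hD hD2 hDx hDx2)⟩, ?_⟩
      rw [hDx, hBx]
    · have hp := hM h
      obtain ⟨D, hD, hDx⟩ := (hfl _ _ h s).2 t (by rw [hv.labc B hBJ, hst])
      obtain ⟨D2, hD2, hDx2⟩ := (hfl _ _ h s).1 t (by rw [hv.labc B2 hp.1, hst])
      refine ⟨D, (hBB D).2 ⟨hD, D2, Or.inr (.step B2 B D2 D s t h hD2 hD hDx2 hDx)⟩, ?_⟩
      rw [hDx, hBx]
  let o : ℕ → ZMod 2 := fun s => ∑ j ∈ BB, if st.cell j s = x then 1 else 0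
  have ho : ∀ s, o s = if ∃ j ∈ BB, st.cell j s = x then 1 else 0 := by
    intro s
    by_cases h : ∃ j ∈ BB, st.cell j s = x
    · rw [if_pos h]
      obtain ⟨j, hj, hjx⟩ := h
      simp only [o]
      rw [Finset.sum_eq_single j]
      · simp [hjx]
      · intro b hb hbj
        rw [if_neg]
        intro hbx
        exact hbj (hv.inj b (hsub hb) j (hsub hj) s (hbx.trans hjx.symm))
      · intro h; exact absurd hj h
    · rw [if_neg h]
      apply Finset.sum_eq_zero
      intro j hj
      rw [if_neg]
      intro hjx; exact h ⟨j, hj, hjx⟩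
  apply hx
  unfold wt
  rw [Finset.sum_comm]
  apply pair_sum p o
  intro i
  rw [ho, ho]
  have : (∃ j ∈ BB, st.cell j (2 * i) = x) ↔ (∃ j ∈ BB, st.cell j (2 * i + 1) = x) := by
    constructor
    · rintro ⟨B, hB, h⟩
      exact hmove B hB _ _ (rl_pair i) h
    · rintro ⟨B, hB, h⟩
      exact hmove B hB _ _ (rl_pair i).symm h
  simp only [this]

theorem machine_step {π : FreeGroup (Fin p) →* G} {T : Fin n → G} {lab : X → Fin p}
    (hrel : π ((rlist p).map FreeGroup.of).prod = 1)
    {st : St n X V I} (hv : Valid π T lab st) :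
    (∃ st' : St n X V I, Valid π T lab st' ∧ st'.E.card < st.E.card) ∨
    Subgroup.closure (Set.range fun i => FreeGroup.map lab (st.S i)) = ⊤ := by
  classical
  by_cases hA : ∃ st' : St n X V I, Valid π T lab st' ∧ st'.E.card < st.E.card
  · exact Or.inl hA
  right
  have hfull : ∀ e ∈ st.E, Redundant lab st e → Full lab st e := by
    intro e he hr
    by_contra hf
    exact hA (case1 hrel hv e he hr hf)
  have hcell : ∀ C' ∈ st.J, ∀ C'' ∈ st.J, C' ≠ C'' → ∀ s,
      (st.src (st.cell C' s) = st.src (st.cell C'' s) ∨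
        st.tgt (st.cell C' s) = st.tgt (st.cell C'' s)) → False := by
    intro C' hC' C'' hC'' hne s h
    rcases h with h | h
    · exact case3 hv hfull hC' hC'' hne s h
    · rw [hv.path C' hC', hv.path C'' hC''] at h
      exact case3 hv hfull hC' hC'' hne (s + 1) h
  -- no conflicting pair of edges
  have hnc : ∀ e' ∈ st.E, ∀ e'' ∈ st.E, lab e' = lab e'' →
      (st.src e' = st.src e'' ∨ st.tgt e' = st.tgt e'') → e' = e'' := by
    intro e' he' e'' he'' hl hend
    by_contra hne
    by_cases hpar : st.src e' = st.src e'' ∧ st.tgt e' = st.tgt e''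
    · have hr' : Redundant lab st e' := by
        intro r _
        refine ⟨e'', Finset.mem_erase.2 ⟨fun h => hne h.symm, he''⟩, hl.symm, ?_, ?_⟩
        · rw [hpar.1]
        · rw [hpar.2]
      have hr'' : Redundant lab st e'' := by
        intro r _
        refine ⟨e', Finset.mem_erase.2 ⟨hne, he'⟩, hl, ?_, ?_⟩
        · rw [hpar.1]
        · rw [hpar.2]
      have hs : rl p (2 * (lab e' : ℕ)) = lab e' := by
        apply Fin.ext
        simp [rl, Nat.mod_eq_of_lt]
      obtain ⟨C', hC', h1⟩ := hfull e' he' hr' _ hs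
      obtain ⟨C'', hC'', h2⟩ := hfull e'' he'' hr'' _ (hs.trans hl)
      refine hcell C' hC' C'' hC'' ?_ (2 * (lab e' : ℕ)) (by rw [h1, h2]; exact hend)
      rintro rfl
      exact hne (h1.symm.trans h2)
    · have hex : ∃ Q' Q'', Q' ≠ Q'' ∧
          ((st.src e' = st.src e'' ∧ st.tgt e' = Q' ∧ st.tgt e'' = Q'') ∨
          (st.tgt e' = st.tgt e'' ∧ st.src e' = Q' ∧ st.src e'' = Q'')) := by
        rcases hend with h | h
        · exact ⟨st.tgt e', st.tgt e'', fun h' => hpar ⟨h, h'⟩, Or.inl ⟨h, rfl, rfl⟩⟩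
        · exact ⟨st.src e', st.src e'', fun h' => hpar ⟨h', h⟩, Or.inr ⟨h, rfl, rfl⟩⟩
      obtain ⟨Q', Q'', hQ, hends⟩ := hex
      apply hA
      refine case2 hv e' e'' he' he'' hne hl Q' Q'' hQ hends _ rfl ?_
      intro j hj j' hj' s hjj
      by_contra hjne
      refine hcell j hj j' hj' hjne s ?_
      by_cases h1 : st.cell j s = e''
      · by_cases h2 : st.cell j' s = e''
        · rw [h1, h2]; left; rfl
        · rw [if_pos h1, if_neg h2] at hjj
          rw [h1, ← hjj]
          rcases hend with h | h
          · left; exact h.symm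
          · right; exact h.symm
      · by_cases h2 : st.cell j' s = e''
        · rw [if_neg h1, if_pos h2] at hjj
          rw [h2, hjj]; exact hend
        · rw [if_neg h1, if_neg h2] at hjj
          rw [hjj]; left; rfl
  -- one vertex
  have hone := hv.tot ⊥ (by
    intro e he f hf hl
    constructor
    · intro h
      have h : st.src e = st.src f := h
      rw [hnc e he f hf hl (Or.inl h)]
    · intro h
      have h : st.tgt e = st.tgt f := h
      rw [hnc e he f hf hl (Or.inr h)])
  obtain ⟨e0, he0, -⟩ := hv.labs (rl p 0)
  have hsrc : ∀ e ∈ st.E, st.src e = st.src e0 := fun e he => ((hone e0 he0 e he).1 : _ = _).symm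
  have htgt : ∀ e ∈ st.E, st.tgt e = st.src e0 := fun e he => ((hone e0 he0 e he).2 : _ = _).symm
  have huniq : ∀ e ∈ st.E, ∀ f ∈ st.E, lab e = lab f → e = f := fun e he f hf hl =>
    hnc e he f hf hl (Or.inl (by rw [hsrc e he, hsrc f hf]))
  have hJ : st.J = ∅ := by
    rw [Finset.eq_empty_iff_forall_notMem]
    intro j hj
    obtain ⟨x, hx⟩ := hv.indep {j} (by simpa using hj) ⟨j, by simp⟩
    apply hx
    unfold wt
    rw [Finset.sum_singleton]
    apply pair_sum p (fun s => if st.cell j s = x then 1 else 0)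
    intro i
    have : st.cell j (2 * i) = st.cell j (2 * i + 1) :=
      huniq _ (hv.mem j hj _) _ (hv.mem j hj _) (by rw [hv.labc j hj, hv.labc j hj, rl_pair])
    simp only [this]
  set c := FreeGroup.map lab (st.q (st.src e0)) with hc
  set K := Subgroup.closure (Set.range fun i => FreeGroup.map lab (st.S i)) with hK
  have hconj : ∀ a, c * FreeGroup.of a * c⁻¹ ∈ K := by
    intro a
    obtain ⟨e, he, rfl⟩ := hv.labs a
    have h1 := hv.gen e he
    rw [hsrc e he, htgt e he] at h1
    have h2 := Subgroup.mem_map_of_mem (FreeGroup.map lab) h1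
    rw [map_mul, map_mul, map_inv, ← hc, FreeGroup.map.of] at h2
    refine (?_ : (st.A p).map (FreeGroup.map lab) ≤ K) h2
    unfold St.A
    rw [MonoidHom.map_closure, Subgroup.closure_le]
    rintro _ ⟨y, hy, rfl⟩
    rcases hy with ⟨i, rfl⟩ | ⟨j, hj, rfl⟩
    · exact Subgroup.subset_closure ⟨i, rfl⟩
    · rw [hJ] at hj; simp at hj
  have hall : ∀ x, c * x * c⁻¹ ∈ K := by
    intro x
    induction x using FreeGroup.induction_on with
    | C1 => simp
    | of a => exact hconj a
    | inv_of a _ =>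
      have := inv_mem (hconj a)
      convert this using 1
      group
    | mul x y hx hy =>
      convert mul_mem hx hy using 1
      group
  rw [eq_top_iff]
  intro x _
  have := hall (c⁻¹ * x * c)
  convert this using 1
  group

theorem machine {π : FreeGroup (Fin p) →* G} {T : Fin n → G} {lab : X → Fin p}
    (hrel : π ((rlist p).map FreeGroup.of).prod = 1) (N : ℕ) :
    ∀ (st : St n X V I) (_ : Valid π T lab st) (_ : st.E.card < N),
    ∃ S : Fin n → FreeGroup (Fin p), (∀ i, π (S i) = T i) ∧
      Subgroup.closure (Set.range S) = ⊤ := by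
  induction N with
  | zero => intro st _ h; omega
  | succ N ih =>
    intro st hv hN
    rcases machine_step hrel hv with ⟨st', hv', hlt⟩ | h
    · exact ih st' hv' (by omega)
    · exact ⟨_, hv.lift, h⟩

end Machine2


section Initial
variable {p n : ℕ} [NeZero p]

/-- Positive words. -/
def pw (l : List (Fin p)) : FreeGroup (Fin p) := (l.map FreeGroup.of).prod

theorem pw_append (l l' : List (Fin p)) : pw (l ++ l') = pw l * pw l' := by simp [pw]

theorem pw_nil : pw ([] : List (Fin p)) = 1 := by simp [pw]

theorem pw_singleton (a : Fin p) : pw [a] = FreeGroup.of a := by simp [pw]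

theorem rlist_length : (rlist p).length = 2 * p := by simp [rlist]

theorem pair_prod {M : Type*} [Monoid M] (f : ℕ → M) (N : ℕ) :
    ((List.range (2 * N)).map fun s => f (s / 2)).prod =
      ((List.range N).map fun i => f i ^ 2).prod := by
  induction N with
  | zero => simp
  | succ N ih =>
    rw [Nat.mul_succ, List.range_succ, List.range_succ, List.range_succ]
    simp only [List.map_append, List.prod_append, ih, List.map_cons, List.map_nil, List.prod_cons,
      List.prod_nil, mul_one]
    have h1 : 2 * N / 2 = N := by omega
    have h2 : (2 * N + 1) / 2 = N := by omega
    rw [h1, h2, pow_two, mul_assoc]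

theorem relator_eq : nonorientableSurfaceRelator p = pw (rlist p) := by
  unfold nonorientableSurfaceRelator pw rlist
  rw [List.map_map]
  have := pair_prod (fun i => FreeGroup.of (⟨i % p, Nat.mod_lt _ (NeZero.pos p)⟩ : Fin p)) p
  refine Eq.trans ?_ this.symm
  rw [List.ofFn_eq_map, ← List.map_coe_finRange_eq_range, List.map_map]
  congr 1
  apply List.map_congr_left
  intro j _
  simp [Nat.mod_eq_of_lt]

theorem rl_surj (a : Fin p) : rl p (2 * (a : ℕ)) = a := by
  apply Fin.ext
  simp [rl, Nat.mod_eq_of_lt]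

theorem mem_rlist (a : Fin p) : a ∈ rlist p := by
  unfold rlist
  rw [List.mem_map]
  exact ⟨2 * (a : ℕ), by have := a.2; simp, rl_surj a⟩

theorem pos_word {G : Type*} [Group G] (π : FreeGroup (Fin p) →* G) (hrel : π (pw (rlist p)) = 1)
    (x : FreeGroup (Fin p)) : ∃ l, π (pw l) = π x := by
  induction x using FreeGroup.induction_on with
  | C1 => exact ⟨[], by rw [pw_nil]⟩
  | of a => exact ⟨[a], by rw [pw_singleton]⟩
  | inv_of a _ =>
    obtain ⟨l1, l2, hl⟩ := List.append_of_mem (mem_rlist a)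
    refine ⟨l2 ++ l1, ?_⟩
    have h : rlist p = l1 ++ ([a] ++ l2) := hl
    rw [h, pw_append, pw_append, pw_singleton, map_mul, map_mul] at hrel
    rw [pw_append, map_mul]
    show _ = π (FreeGroup.of a)⁻¹
    rw [map_inv]
    have h1 := eq_inv_of_mul_eq_one_right hrel
    rw [eq_inv_iff_mul_eq_one]
    have h2 : π (FreeGroup.of a) * π (pw l2) * π (pw l1) = 1 := by rw [h1]; group
    rw [← mul_eq_one_iff_eq_inv'] at *
    have h3 := eq_inv_of_mul_eq_one_right (mul_assoc (π (FreeGroup.of a)) _ _ ▸ h2)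
    rw [h3]; group
  | mul x y hx hy =>
    obtain ⟨l, hl⟩ := hx
    obtain ⟨l', hl'⟩ := hy
    exact ⟨l ++ l', by rw [pw_append, map_mul, map_mul, hl, hl']⟩

def conjs (p : ℕ) [NeZero p] (J : Set (List (Fin p))) : Set (FreeGroup (Fin p)) :=
  {x | ∃ g ∈ J, x = pw g * pw (rlist p) * (pw g)⁻¹}

theorem conj_normal : (Subgroup.closure (conjs p Set.univ)).Normal := by
  set N0 := Subgroup.closure (conjs p Set.univ) with hN0
  have hg : ∀ g : List (Fin p), pw g * pw (rlist p) * (pw g)⁻¹ ∈ N0 :=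
    fun g => Subgroup.subset_closure ⟨g, trivial, rfl⟩
  have hgen : ∀ x : FreeGroup (Fin p), (∀ g, x * (pw g * pw (rlist p) * (pw g)⁻¹) * x⁻¹ ∈ N0) →
      ∀ m ∈ N0, x * m * x⁻¹ ∈ N0 := by
    intro x hx m hm
    rw [hN0] at hm
    induction hm using Subgroup.closure_induction with
    | mem m hm =>
      obtain ⟨g, -, rfl⟩ := hm
      exact hx g
    | one => simp
    | mul a b _ _ ha hb =>
      convert mul_mem ha hb using 1
      group
    | inv a _ ha =>
      convert inv_mem ha using 1
      group
  refine ⟨?_⟩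
  intro m hm x
  induction x using FreeGroup.induction_on generalizing m with
  | C1 => simpa using hm
  | of a =>
    refine hgen _ ?_ m hm
    intro g
    have := hg ([a] ++ g)
    rw [pw_append, pw_singleton] at this
    convert this using 1
    simp [mul_assoc]
  | inv_of a _ =>
    refine hgen _ ?_ m hm
    intro g
    obtain ⟨l1, l2, hl⟩ := List.append_of_mem (mem_rlist a)
    have h : pw (rlist p) = pw l1 * (FreeGroup.of a * pw l2) := by
      have h : rlist p = l1 ++ ([a] ++ l2) := hl
      rw [h, pw_append, pw_append, pw_singleton]
    have ha : (FreeGroup.of a)⁻¹ = pw l2 * (pw (rlist p))⁻¹ * pw l1 := by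
      rw [h]; group
    have e := mul_mem (mul_mem (inv_mem (hg l2)) (hg (l2 ++ (l1 ++ g)))) (hg l2)
    rw [pw_append, pw_append] at e
    convert e using 1
    show (FreeGroup.of a)⁻¹ * _ * ((FreeGroup.of a)⁻¹)⁻¹ = _
    rw [ha]
    group
  | mul x y hx hy =>
    have := hx _ (hy m hm)
    convert this using 1
    group

theorem conj_top {G : Type*} [Group G] (π : FreeGroup (Fin p) →* G)
    (hker : π.ker = Subgroup.normalClosure {pw (rlist p)}) (hsurj : Function.Surjective π)
    (S : Fin n → FreeGroup (Fin p)) (hS : Subgroup.closure (Set.range fun i => π (S i)) = ⊤) :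
    Subgroup.closure (Set.range S ∪ conjs p Set.univ) = ⊤ := by
  set K := Subgroup.closure (Set.range S ∪ conjs p Set.univ)
  have h1 : Subgroup.closure (conjs p Set.univ) ≤ K :=
    Subgroup.closure_mono Set.subset_union_right
  have h2 : π.ker ≤ K := by
    rw [hker]
    refine le_trans ?_ h1
    have := conj_normal (p := p)
    apply Subgroup.normalClosure_le_normal
    rw [Set.singleton_subset_iff]
    apply Subgroup.subset_closure
    exact ⟨[], trivial, by simp [pw_nil]⟩
  have h3 : K.map π = ⊤ := by
    rw [eq_top_iff, ← hS, Subgroup.closure_le]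
    rintro _ ⟨i, rfl⟩
    exact Subgroup.mem_map_of_mem _ (Subgroup.subset_closure (Or.inl ⟨i, rfl⟩))
  rw [eq_top_iff]
  intro x _
  have hx : π x ∈ K.map π := by rw [h3]; trivial
  obtain ⟨y, hy, hyx⟩ := hx
  have h4 : y⁻¹ * x ∈ π.ker := by rw [MonoidHom.mem_ker, map_mul, map_inv, hyx]; group
  have := mul_mem hy (h2 h4)
  simpa using this

theorem conj_finite (S : Fin n → FreeGroup (Fin p))
    (hS : Subgroup.closure (Set.range S ∪ conjs p Set.univ) = ⊤) :
    ∃ J : Finset (List (Fin p)), Subgroup.closure (Set.range S ∪ conjs p J) = ⊤ := by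
  classical
  have hmono : ∀ J J' : Finset (List (Fin p)), J ⊆ J' →
      Subgroup.closure (Set.range S ∪ conjs p J) ≤ Subgroup.closure (Set.range S ∪ conjs p J') := by
    intro J J' h
    apply Subgroup.closure_mono
    apply Set.union_subset_union_right
    rintro _ ⟨g, hg, rfl⟩
    exact ⟨g, h hg, rfl⟩
  have hx : ∀ x : FreeGroup (Fin p), ∃ J : Finset (List (Fin p)),
      x ∈ Subgroup.closure (Set.range S ∪ conjs p J) := by
    intro x
    have hx : x ∈ Subgroup.closure (Set.range S ∪ conjs p Set.univ) := by rw [hS]; trivial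
    induction hx using Subgroup.closure_induction with
    | mem x hx =>
      rcases hx with hx | ⟨g, -, rfl⟩
      · exact ⟨∅, Subgroup.subset_closure (Or.inl hx)⟩
      · exact ⟨{g}, Subgroup.subset_closure (Or.inr ⟨g, by simp, rfl⟩)⟩
    | one => exact ⟨∅, one_mem _⟩
    | mul x y _ _ hx hy =>
      obtain ⟨J, hJ⟩ := hx
      obtain ⟨J', hJ'⟩ := hy
      exact ⟨J ∪ J', mul_mem (hmono _ _ Finset.subset_union_left hJ)
        (hmono _ _ Finset.subset_union_right hJ')⟩
    | inv x _ hx =>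
      obtain ⟨J, hJ⟩ := hx
      exact ⟨J, inv_mem hJ⟩
  choose J hJ using fun a : Fin p => hx (FreeGroup.of a)
  refine ⟨Finset.univ.biUnion J, ?_⟩
  rw [eq_top_iff]
  intro x hx0
  clear hx0
  induction x using FreeGroup.induction_on with
  | C1 => exact one_mem _
  | of a => exact hmono _ _ (Finset.subset_biUnion_of_mem J (Finset.mem_univ a)) (hJ a)
  | inv_of a h => exact inv_mem h
  | mul x y hx hy => exact mul_mem hx hy

/-- Arcs of the initial graph: loops, sticks and cells. -/
abbrev Arc (n p : ℕ) := Fin n ⊕ (List (Fin p) ⊕ List (Fin p))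

def wd (sw : Fin n → List (Fin p)) : Arc n p → List (Fin p)
  | Sum.inl i => sw i
  | Sum.inr (Sum.inl g) => g
  | Sum.inr (Sum.inr _) => rlist p

def ast : Arc n p → Option (List (Fin p))
  | Sum.inl _ => none
  | Sum.inr (Sum.inl _) => none
  | Sum.inr (Sum.inr g) => some g

def aen : Arc n p → Option (List (Fin p))
  | Sum.inl _ => none
  | Sum.inr (Sum.inl g) => some g
  | Sum.inr (Sum.inr g) => some g

def node (sw : Fin n → List (Fin p)) (k : Arc n p) (m : ℕ) :
    Option (List (Fin p)) ⊕ (Arc n p × ℕ) :=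
  if m = 0 then Sum.inl (ast k) else if m = (wd sw k).length then Sum.inl (aen k)
  else Sum.inr (k, m)

def alab (sw : Fin n → List (Fin p)) (x : Arc n p × ℕ) : Fin p :=
  (wd sw x.1).getD x.2 (rl p 0)

def PP (k : Arc n p) (m : ℕ) : FreeGroup (Arc n p × ℕ) :=
  ((List.range m).map fun t => FreeGroup.of (k, t)).prod

theorem PP_succ (k : Arc n p) (m : ℕ) : PP k (m + 1) = PP k m * FreeGroup.of (k, m) := by
  simp [PP, List.range_succ]

def qb (o : Option (List (Fin p))) : FreeGroup (Arc n p × ℕ) :=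
  match o with
  | none => 1
  | some g => PP (Sum.inr (Sum.inl g)) g.length

def qv (v : Option (List (Fin p)) ⊕ (Arc n p × ℕ)) : FreeGroup (Arc n p × ℕ) :=
  match v with
  | Sum.inl o => qb o
  | Sum.inr (k, m) => qb (ast k) * PP k m

def act (J : Finset (List (Fin p))) : Finset (Arc n p) :=
  Finset.univ.disjSum (J.disjSum J)

def EE (sw : Fin n → List (Fin p)) (J : Finset (List (Fin p))) : Finset (Arc n p × ℕ) :=
  (act J).biUnion fun k => (Finset.range (wd sw k).length).image fun m => (k, m)

theorem mem_EE (sw : Fin n → List (Fin p)) (J : Finset (List (Fin p))) (k : Arc n p) (m : ℕ) :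
    (k, m) ∈ EE sw J ↔ k ∈ act J ∧ m < (wd sw k).length := by
  unfold EE
  simp only [Finset.mem_biUnion, Finset.mem_image, Finset.mem_range, Prod.mk.injEq]
  constructor
  · rintro ⟨k', hk', m', hm', rfl, rfl⟩
    exact ⟨hk', hm'⟩
  · rintro ⟨hk, hm⟩
    exact ⟨k, hk, m, hm, rfl, rfl⟩

def initSt (sw : Fin n → List (Fin p)) (J : Finset (List (Fin p))) :
    St n (Arc n p × ℕ) (Option (List (Fin p)) ⊕ (Arc n p × ℕ)) (List (Fin p)) where
  E := EE sw J
  J := J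
  src := fun x => node sw x.1 x.2
  tgt := fun x => node sw x.1 (x.2 + 1)
  cell := fun j s => (Sum.inr (Sum.inr j), s % (2 * p))
  S := fun i => PP (Sum.inl i) (sw i).length
  q := qv
  k := fun j => qb (some j)

theorem map_PP (sw : Fin n → List (Fin p)) (k : Arc n p) (m : ℕ) (hm : m ≤ (wd sw k).length) :
    FreeGroup.map (alab sw) (PP k m) = pw ((wd sw k).take m) := by
  induction m with
  | zero => simp [PP, pw]
  | succ m ih =>
    have hlt : m < (wd sw k).length := hm
    rw [PP_succ, map_mul, ih (by omega), FreeGroup.map.of, List.take_succ_eq_append_getElem hlt,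
      pw_append, pw_singleton]
    congr 2
    simp [alab, hlt]

theorem rl_mod (s : ℕ) : rl p (s % (2 * p)) = rl p s := by
  apply Fin.ext
  show (s % (2 * p)) / 2 % p = s / 2 % p
  have : (s % (2 * p)) / 2 = s / 2 % p := by rw [Nat.mod_mul]; omega
  rw [this, Nat.mod_mod]

theorem alab_cell (sw : Fin n → List (Fin p)) (g : List (Fin p)) (m : ℕ) (hm : m < 2 * p) :
    alab sw (Sum.inr (Sum.inr g), m) = rl p m := by
  simp [alab, wd, rlist, hm]

theorem initSt_tot (sw : Fin n → List (Fin p)) (J : Finset (List (Fin p)))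
    (htop : Subgroup.closure (Set.range (fun i => pw (sw i)) ∪ conjs p J) = ⊤)
    (hne : ∀ k ∈ act (n := n) J, wd sw k ≠ [])
    (r : Setoid (Option (List (Fin p)) ⊕ (Arc n p × ℕ)))
    (hr : Closed (alab sw) (initSt sw J).src (initSt sw J).tgt (EE sw J) r) :
    ∀ k ∈ act (n := n) J, ∀ m ≤ (wd sw k).length, r (node sw k m) (Sum.inl none) := by
  classical
  let Q := Quotient r
  let R : Fin p → Q → Q → Prop := fun a x y => ∃ e ∈ EE sw J, alab sw e = a ∧
    (⟦(initSt sw J).src e⟧ : Q) = x ∧ (⟦(initSt sw J).tgt e⟧ : Q) = y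
  let Z : Finset Q := (EE sw J).image (fun e => ⟦(initSt sw J).src e⟧) ∪
    (EE sw J).image (fun e => ⟦(initSt sw J).tgt e⟧)
  have hσ : ∀ a, ∃ σ : Equiv.Perm Q, ∀ x y, R a x y → σ x = y := by
    intro a
    refine perm_ext (R a) Z Z.finite_toSet ?_ ?_ ?_
    · rintro x y ⟨e, he, -, rfl, rfl⟩
      exact ⟨Finset.mem_coe.2 (Finset.mem_union_left _ (Finset.mem_image_of_mem _ he)),
        Finset.mem_coe.2 (Finset.mem_union_right _ (Finset.mem_image_of_mem _ he))⟩
    · rintro x y y' ⟨e, he, hl, rfl, rfl⟩ ⟨f, hf, hl', hs, rfl⟩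
      apply Quotient.sound
      exact (hr e he f hf (hl.trans hl'.symm)).1 (Quotient.exact hs.symm)
    · rintro x x' y ⟨e, he, hl, rfl, rfl⟩ ⟨f, hf, hl', rfl, ht⟩
      apply Quotient.sound
      exact (hr e he f hf (hl.trans hl'.symm)).2 (Quotient.exact ht.symm)
  choose σ hσ using hσ
  let ψ : FreeGroup (Fin p) →* Equiv.Perm Q := FreeGroup.lift (fun a => (σ a)⁻¹)
  let cls : Arc n p → ℕ → Q := fun k m => ⟦node sw k m⟧
  have hψ : ∀ k ∈ act J, ∀ m, m < (wd sw k).length →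
      ψ (FreeGroup.of (alab sw (k, m))) (cls k (m + 1)) = cls k m := by
    intro k hk m hm
    simp only [ψ, FreeGroup.lift_apply_of]
    rw [Equiv.Perm.inv_eq_iff_eq]
    refine (hσ _ _ _ ⟨(k, m), (mem_EE sw J k m).2 ⟨hk, hm⟩, rfl, rfl, rfl⟩).symm
  have hψm : ∀ k ∈ act J, ∀ m, m ≤ (wd sw k).length →
      ψ (pw ((wd sw k).take m)) (cls k m) = cls k 0 := by
    intro k hk m
    induction m with
    | zero => intro _; simp [pw_nil]
    | succ m ih =>
      intro hm
      have hlt : m < (wd sw k).length := hm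
      have h1 := hψ k hk m hlt
      have h2 : alab sw (k, m) = (wd sw k)[m] := by simp [alab, hlt]
      rw [List.take_succ_eq_append_getElem hlt, pw_append, pw_singleton, map_mul,
        Equiv.Perm.mul_apply, ← h2, h1, ih (by omega)]
  have hcls0 : ∀ k, cls k 0 = ⟦Sum.inl (ast k)⟧ := by intro k; simp [cls, node]
  have hclsl : ∀ k ∈ act J, cls k (wd sw k).length = ⟦Sum.inl (aen k)⟧ := by
    intro k hk
    have : (wd sw k).length ≠ 0 := fun h => hne k hk (List.length_eq_zero_iff.1 h)
    simp [cls, node, hne k hk]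
  have hfull : ∀ k ∈ act J, ψ (pw (wd sw k)) ⟦Sum.inl (aen k)⟧ = ⟦Sum.inl (ast k)⟧ := by
    intro k hk
    have := hψm k hk _ le_rfl
    rwa [List.take_length, hclsl k hk, hcls0] at this
  let b : Q := ⟦Sum.inl none⟧
  have hSb : ∀ i, ψ (pw (sw i)) b = b := fun i => hfull (Sum.inl i) (by simp [act])
  have hst : ∀ g ∈ J, ψ (pw g) ⟦Sum.inl (some g)⟧ = b :=
    fun g hg => hfull (Sum.inr (Sum.inl g)) (by simp [act, hg])
  have hce : ∀ g ∈ J, ψ (pw (rlist p)) ⟦Sum.inl (some g)⟧ = ⟦Sum.inl (some g)⟧ :=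
    fun g hg => hfull (Sum.inr (Sum.inr g)) (by simp [act, hg])
  have hfix : ∀ x, ψ x b = b := by
    intro x
    have hx : x ∈ Subgroup.closure (Set.range (fun i => pw (sw i)) ∪ conjs p J) := by
      rw [htop]; trivial
    induction hx using Subgroup.closure_induction with
    | mem x hx =>
      rcases hx with ⟨i, rfl⟩ | ⟨g, hg, rfl⟩
      · exact hSb i
      · have h1 : (ψ (pw g))⁻¹ b = ⟦Sum.inl (some g)⟧ := by
          rw [Equiv.Perm.inv_eq_iff_eq, hst g hg]
        rw [map_mul, map_mul, map_inv, Equiv.Perm.mul_apply, Equiv.Perm.mul_apply, h1, hce g hg,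
          hst g hg]
    | one => simp
    | mul x y _ _ hx hy => rw [map_mul, Equiv.Perm.mul_apply, hy, hx]
    | inv x _ hx => rw [map_inv, Equiv.Perm.inv_eq_iff_eq, hx]
  have hvg : ∀ g ∈ J, (⟦Sum.inl (some g)⟧ : Q) = b := fun g hg =>
    (ψ (pw g)).injective ((hst g hg).trans (hfix _).symm)
  have hz : ∀ k ∈ act J, cls k 0 = b := by
    intro k hk
    rw [hcls0]
    rcases k with i | g | g
    · rfl
    · rfl
    · exact hvg g (by simpa [act] using hk)
  intro k hk m hm
  have h1 : cls k m = b := by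
    apply (ψ (pw ((wd sw k).take m))).injective
    rw [hψm k hk m hm, hz k hk, hfix]
  exact Quotient.exact h1

theorem initSt_valid {G : Type} [Group G] (π : FreeGroup (Fin p) →* G) (T : Fin n → G)
    (sw : Fin n → List (Fin p)) (J : Finset (List (Fin p)))
    (hT : ∀ i, π (pw (sw i)) = T i) (hsw : ∀ i, sw i ≠ []) (hJne : ∀ g ∈ J, g ≠ [])
    (hJ : J.Nonempty)
    (htop : Subgroup.closure (Set.range (fun i => pw (sw i)) ∪ conjs p J) = ⊤) :
    Valid π T (alab sw) (initSt sw J) := by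
  have hp : 0 < p := NeZero.pos p
  have hne : ∀ k ∈ act (n := n) J, wd sw k ≠ [] := by
    intro k hk
    rcases k with i | g | g
    · exact hsw i
    · exact hJne g (by simpa [act] using hk)
    · intro h
      have h' : rlist p = [] := h
      have := rlist_length (p := p)
      rw [h'] at this
      simp at this; omega
  have hlenc : ∀ g : List (Fin p), (wd sw (Sum.inr (Sum.inr g))).length = 2 * p :=
    fun g => rlist_length
  have hmodlt : ∀ s, s % (2 * p) < 2 * p := fun s => Nat.mod_lt _ (by omega)
  have hactc : ∀ g ∈ J, (Sum.inr (Sum.inr g) : Arc n p) ∈ act J := by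
    intro g hg; simp [act, hg]
  refine ⟨?_, ?_, ?_, ?_, ?_, ?_, ?_, ?_, ?_, ?_⟩
  · intro j hj s
    exact (mem_EE sw J _ _).2 ⟨hactc j hj, by rw [hlenc]; exact hmodlt s⟩
  · intro j hj s
    simp [initSt]
  · intro j hj s
    show alab sw (Sum.inr (Sum.inr j), s % (2 * p)) = _
    rw [alab_cell sw j _ (hmodlt s), rl_mod]
  · intro j hj s
    show node sw (Sum.inr (Sum.inr j)) (s % (2 * p) + 1) =
      node sw (Sum.inr (Sum.inr j)) ((s + 1) % (2 * p))
    by_cases h : s % (2 * p) + 1 = 2 * p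
    · have h1 : (s + 1) % (2 * p) = 0 := by
        rw [Nat.add_mod, Nat.mod_eq_of_lt (show 1 < 2 * p by omega), h, Nat.mod_self]
      rw [h, h1]
      simp [node, hlenc, ast, aen]
    · have h1 : (s + 1) % (2 * p) = s % (2 * p) + 1 := by
        have := hmodlt s
        rw [Nat.add_mod, Nat.mod_eq_of_lt (show 1 < 2 * p by omega), Nat.mod_eq_of_lt]
        omega
      rw [h1]
  · intro j hj j' hj' s h
    have h1 : (Sum.inr (Sum.inr j) : Arc n p) = Sum.inr (Sum.inr j') := congrArg Prod.fst h
    simpa using h1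
  · rintro J' hJ' ⟨j, hj⟩
    refine ⟨(Sum.inr (Sum.inr j), 0), ?_⟩
    have : wt p (initSt sw J).cell J' (Sum.inr (Sum.inr j), 0) = 1 := by
      unfold wt
      rw [Finset.sum_eq_single j]
      · rw [Finset.sum_eq_single 0]
        · simp [initSt]
        · intro s hs hs0
          rw [if_neg]
          intro h
          have h1 : s % (2 * p) = 0 := congrArg Prod.snd h
          rw [Nat.mod_eq_of_lt (Finset.mem_range.1 hs)] at h1
          exact hs0 h1
        · intro h; exact absurd (Finset.mem_range.2 (by omega)) h
      · intro j' _ hjj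
        apply Finset.sum_eq_zero
        intro s _
        rw [if_neg]
        intro h
        have h1 : (Sum.inr (Sum.inr j') : Arc n p) = Sum.inr (Sum.inr j) := congrArg Prod.fst h
        exact hjj (by simpa using h1)
      · intro h; exact absurd hj h
    rw [this]; exact one_ne_zero
  · rintro ⟨k, m⟩ he
    obtain ⟨hk, hm⟩ := (mem_EE sw J k m).1 he
    show qv (node sw k m) * FreeGroup.of (k, m) * (qv (node sw k (m + 1)))⁻¹ ∈ _
    have h1 : qv (node sw k m) = qb (ast k) * PP k m := by
      unfold node
      by_cases hm0 : m = 0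
      · subst hm0; simp [qv, PP]
      · rw [if_neg hm0, if_neg (by omega)]; rfl
    rw [h1, mul_assoc (qb (ast k)), ← PP_succ]
    by_cases hl : m + 1 = (wd sw k).length
    · have h2 : qv (node sw k (m + 1)) = qb (aen k) := by
        unfold node
        rw [if_neg (by omega), if_pos hl]; rfl
      rw [h2, hl]
      rcases k with i | g | g
      · apply Subgroup.subset_closure
        left
        refine ⟨i, ?_⟩
        simp [initSt, ast, aen, qb, wd]
      · simp [ast, aen, qb, wd]
      · apply Subgroup.subset_closure
        right
        refine ⟨g, (show g ∈ J by simpa [act] using hk), ?_⟩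
        have h3 : cw p (initSt sw J).cell g = PP (Sum.inr (Sum.inr g)) (2 * p) := by
          unfold cw PP
          congr 1
          apply List.map_congr_left
          intro s hs
          show FreeGroup.of (_, s % (2 * p)) = _
          rw [Nat.mod_eq_of_lt (List.mem_range.1 hs)]
        rw [h3, hlenc]
        rfl
    · have h2 : qv (node sw k (m + 1)) = qb (ast k) * PP k (m + 1) := by
        unfold node
        rw [if_neg (by omega), if_neg hl]; rfl
      rw [h2, mul_inv_cancel]
      exact one_mem _
  · intro i
    show π (FreeGroup.map (alab sw) (PP (Sum.inl i) (wd sw (Sum.inl i)).length)) = _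
    rw [map_PP sw (Sum.inl i) _ le_rfl]
    show π (pw ((sw i).take (sw i).length)) = _
    rw [List.take_length, hT]
  · intro r hr
    have h := initSt_tot sw J htop hne r hr
    rintro ⟨k, m⟩ he ⟨k', m'⟩ hf
    obtain ⟨hk, hm⟩ := (mem_EE sw J k m).1 he
    obtain ⟨hk', hm'⟩ := (mem_EE sw J k' m').1 hf
    exact ⟨r.trans (h k hk m hm.le) (r.symm (h k' hk' m' hm'.le)),
      r.trans (h k hk m hm.le) (r.symm (h k' hk' (m' + 1) hm'))⟩
  · intro a
    obtain ⟨g, hg⟩ := hJ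
    have ha : 2 * (a : ℕ) < 2 * p := by have := a.2; omega
    refine ⟨(Sum.inr (Sum.inr g), 2 * (a : ℕ)), (mem_EE sw J _ _).2 ⟨hactc g hg, by rw [hlenc]; exact ha⟩, ?_⟩
    rw [alab_cell sw g _ ha, rl_surj]

/-- Lifting generating tuples to the free group. -/
theorem lifting {G : Type} [Group G] (π : FreeGroup (Fin p) →* G)
    (hker : π.ker = Subgroup.normalClosure {pw (rlist p)}) (hsurj : Function.Surjective π)
    (T : Fin n → G) (hT : Subgroup.closure (Set.range T) = ⊤) :
    ∃ S : Fin n → FreeGroup (Fin p), (∀ i, π (S i) = T i) ∧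
      Subgroup.closure (Set.range S) = ⊤ := by
  classical
  have hp : 0 < p := NeZero.pos p
  have hrel : π (pw (rlist p)) = 1 := by
    rw [← MonoidHom.mem_ker, hker]
    exact Subgroup.subset_normalClosure rfl
  have hrne : rlist p ≠ [] := by
    intro h
    have := rlist_length (p := p)
    rw [h] at this
    simp at this; omega
  have h1 : ∀ i, ∃ l, l ≠ [] ∧ π (pw l) = T i := by
    intro i
    obtain ⟨x, hx⟩ := hsurj (T i)
    obtain ⟨l, hl⟩ := pos_word π hrel x
    refine ⟨l ++ rlist p, by simp [hrne], ?_⟩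
    rw [pw_append, map_mul, hrel, mul_one, hl, hx]
  choose sw hsw hswT using h1
  have htop := conj_top π hker hsurj (fun i => pw (sw i)) (by simpa [hswT] using hT)
  obtain ⟨J0, hJ0⟩ := conj_finite _ htop
  let J : Finset (List (Fin p)) := (insert [] J0).image (fun g => g ++ rlist p)
  have hJtop : Subgroup.closure (Set.range (fun i => pw (sw i)) ∪ conjs p J) = ⊤ := by
    rw [eq_top_iff, ← hJ0]
    apply Subgroup.closure_mono
    apply Set.union_subset_union_right
    rintro _ ⟨g, hg, rfl⟩
    refine ⟨g ++ rlist p, Finset.mem_coe.2 (Finset.mem_image_of_mem _ (Finset.mem_insert_of_mem hg)), ?_⟩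
    rw [pw_append]
    group
  have hv := initSt_valid π T sw J hswT hsw
    (by intro g hg
        obtain ⟨g', -, rfl⟩ := Finset.mem_image.1 hg
        simp [hrne])
    ⟨_, Finset.mem_image_of_mem _ (Finset.mem_insert_self _ _)⟩ hJtop
  exact machine hrel _ _ hv (Nat.lt_succ_self _)

end Initial

end NS

/-- **Louder's theorem (non-orientable case).** Every generating `n`-tuple of the
fundamental group `⟨a₁,…,a_p ∣ a₁²a₂²⋯a_p²⟩` of the closed non-orientable surface of
genus `p ≥ 2` satisfies `n ≥ p` and is Nielsen equivalent to `(a₁,…,a_p,1,…,1)`.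
In particular, any two generating `n`-tuples are Nielsen equivalent. -/
theorem nielsen_nonorientable_surface_group (p : ℕ) (hp : 2 ≤ p) {n : ℕ} :
    (∀ T : Fin n → PresentedGroup ({nonorientableSurfaceRelator p} : Set (FreeGroup (Fin p))),
      Subgroup.closure (Set.range T) = ⊤ →
        p ≤ n ∧
        NielsenEquiv T (fun i =>
          if h : (i : ℕ) < p then PresentedGroup.of (⟨(i : ℕ), h⟩ : Fin p) else 1)) ∧
    (∀ T T' : Fin n → PresentedGroup ({nonorientableSurfaceRelator p} : Set (FreeGroup (Fin p))),
      Subgroup.closure (Set.range T) = ⊤ → Subgroup.closure (Set.range T') = ⊤ →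
        NielsenEquiv T T') := by
  have hp0 : 0 < p := by omega
  haveI : NeZero p := ⟨by omega⟩
  have main : ∀ T : Fin n →
      PresentedGroup ({nonorientableSurfaceRelator p} : Set (FreeGroup (Fin p))),
      Subgroup.closure (Set.range T) = ⊤ →
        p ≤ n ∧
        NielsenEquiv T (fun i =>
          if h : (i : ℕ) < p then PresentedGroup.of (⟨(i : ℕ), h⟩ : Fin p) else 1) := by
    intro T hT
    obtain ⟨S, hS, hgen⟩ := NS.lifting
      (PresentedGroup.mk ({nonorientableSurfaceRelator p} : Set (FreeGroup (Fin p))))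
      (by
        rw [← NS.relator_eq]
        exact QuotientGroup.ker_mk' _)
      (QuotientGroup.mk'_surjective _) T hT
    obtain ⟨hle, hne⟩ := NS.free_standard hp0 S hgen
    refine ⟨hle, ?_⟩
    have h := NS.NE.map
      (PresentedGroup.mk ({nonorientableSurfaceRelator p} : Set (FreeGroup (Fin p)))) hne
    convert h using 1
    · funext i
      exact (hS i).symm
    · funext i
      simp only [Function.comp]
      split_ifs
      · rfl
      · rw [map_one]
  exact ⟨main, fun T T' hT hT' => NS.NE.trans (main T hT).2 (NS.NE.symm (main T' hT').2)⟩
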